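/- Let 1 ≤ q < ∞, p = 2q, α, β ∈ J_{2q}, and λ > 1. Then there exist constants c₁ > 0 (depending on q, α, β, λ) and c₂ > 0 (depending on q, α, β) such that for all 0 < δ < 1/4: c₁·δ^{1/q}·|ln δ|^{1/(2q)}·|ln|ln δ||^{−λ/(2q)} ≤ sup_{f ∈ B_{2q}^{α,β} ∩ M¹} ω_φ¹(f, δ)_{w_{α,β}, q} ≤ c₂·δ^{1/q}·|ln δ|^{1/(2q)}. -/

import Mathlib

open MeasureTheory Set Filter
open scoped ENNReal

noncomputable section

/-- The Jacobi weight `w_{α,β}(x) = (1+x)^α (1-x)^β`. -/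
def jacobi (α β : ℝ) (x : ℝ) : ℝ := (1 + x) ^ α * (1 - x) ^ β

/-- `φ(x) = √(1-x²)`. -/
def phiW (x : ℝ) : ℝ := Real.sqrt (1 - x ^ 2)

/-- The `L^p` norm of `g` on the interval `[a,b]` (essential sup when `p = ∞`). -/
def LpOn (g : ℝ → ℝ) (p : ℝ≥0∞) (a b : ℝ) : ℝ≥0∞ :=
  eLpNorm g p (volume.restrict (Icc a b))

/-- The `k`-th symmetric difference `Δ_h^k(f,x)` relative to `[-1,1]`. -/
def symmDelta (k : ℕ) (h : ℝ) (f : ℝ → ℝ) (x : ℝ) : ℝ :=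
  if (x - k * h / 2 ∈ Icc (-1 : ℝ) 1 ∧ x + k * h / 2 ∈ Icc (-1 : ℝ) 1) then
    ∑ i ∈ Finset.range (k + 1), ((k.choose i : ℝ) * (-1 : ℝ) ^ (k - i) * f (x - k * h / 2 + i * h))
  else 0

/-- Main-part weighted modulus `Ω_φ^k(f,δ)_{w,p}`. -/
def OmegaMain (k : ℕ) (f : ℝ → ℝ) (δ : ℝ) (wt : ℝ → ℝ) (p : ℝ≥0∞) : ℝ≥0∞ :=
  ⨆ h ∈ Ioc (0 : ℝ) δ,
    LpOn (fun x => wt x * symmDelta k (h * phiW x) f x) p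
      (-1 + 2 * (k : ℝ) ^ 2 * h ^ 2) (1 - 2 * (k : ℝ) ^ 2 * h ^ 2)

/-- Forward part `Ω→_φ^k(f,δ)_{w,p}`. -/
def OmegaFwd (k : ℕ) (f : ℝ → ℝ) (δ : ℝ) (wt : ℝ → ℝ) (p : ℝ≥0∞) : ℝ≥0∞ :=
  ⨆ h ∈ Ioc (0 : ℝ) (2 * (k : ℝ) ^ 2 * δ ^ 2),
    LpOn (fun x => wt x * symmDelta k h f (x + k * h / 2)) p
      (-1) (-1 + 2 * (k : ℝ) ^ 2 * δ ^ 2)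

/-- Backward part `Ω←_φ^k(f,δ)_{w,p}`. -/
def OmegaBwd (k : ℕ) (f : ℝ → ℝ) (δ : ℝ) (wt : ℝ → ℝ) (p : ℝ≥0∞) : ℝ≥0∞ :=
  ⨆ h ∈ Ioc (0 : ℝ) (2 * (k : ℝ) ^ 2 * δ ^ 2),
    LpOn (fun x => wt x * symmDelta k h f (x - k * h / 2)) p
      (1 - 2 * (k : ℝ) ^ 2 * δ ^ 2) 1

/-- Weighted Ditzian–Totik modulus `ω_φ^k(f,δ)_{w,p}`. -/
def omegaDT (k : ℕ) (f : ℝ → ℝ) (δ : ℝ) (wt : ℝ → ℝ) (p : ℝ≥0∞) : ℝ≥0∞ :=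
  OmegaMain k f δ wt p + OmegaFwd k f δ wt p + OmegaBwd k f δ wt p

/-- `f` is `k`-monotone on `(-1,1)`: all `k`-th divided differences over `k+1` distinct
points of `(-1,1)` are nonnegative. -/
def kMonotoneOn (k : ℕ) (f : ℝ → ℝ) : Prop :=
  ∀ x : Fin (k + 1) → ℝ, Function.Injective x → (∀ i, x i ∈ Ioo (-1 : ℝ) 1) →
    0 ≤ ∑ i, f (x i) / ∏ j ∈ Finset.univ.erase i, (x i - x j)

/-- `M^k`, the class of `k`-monotone functions on `(-1,1)`. -/
def MSet (k : ℕ) : Set (ℝ → ℝ) := {f | kMonotoneOn k f}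

/-- `M_+^k`, the `k`-monotone functions on `(-1,1)` vanishing on `(-1,0]`. -/
def MPlus (k : ℕ) : Set (ℝ → ℝ) :=
  {f | kMonotoneOn k f ∧ ∀ x : ℝ, -1 < x → x ≤ 0 → f x = 0}

/-- `J_p = (-1/p, ∞)` for finite `p`, `[0,∞)` for `p = ∞`. -/
def Jset (p : ℝ≥0∞) : Set ℝ := if p = ∞ then Ici 0 else Ioi (-1 / p.toReal)

/-- `W_p^{α,β}`. -/
def WSet (p : ℝ≥0∞) (α β : ℝ) : Set (ℝ → ℝ) :=
  {f | Measurable f ∧ LpOn (fun x => jacobi α β x * f x) p (-1) 1 ≠ ⊤}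

/-- `B_p^{α,β}`, the unit sphere of `W_p^{α,β}`. -/
def BSet (p : ℝ≥0∞) (α β : ℝ) : Set (ℝ → ℝ) :=
  {f | Measurable f ∧ LpOn (fun x => jacobi α β x * f x) p (-1) 1 = 1}

/-- Best weighted approximation `E_n(f)_{w,q}` by polynomials of degree at most `n`. -/
def En (n : ℕ) (f : ℝ → ℝ) (wt : ℝ → ℝ) (q : ℝ≥0∞) : ℝ≥0∞ :=
  ⨅ P ∈ {P : Polynomial ℝ | P.natDegree ≤ n},
    LpOn (fun x => wt x * (f x - P.eval x)) q (-1) 1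

/-- `E(X, P_n)_{w,q}`. -/
def EClass (X : Set (ℝ → ℝ)) (n : ℕ) (wt : ℝ → ℝ) (q : ℝ≥0∞) : ℝ≥0∞ :=
  ⨆ f ∈ X, En n f wt q

/-!
Upper bound: reflection reduces everything to the endpoint `1`, where the interval is cut into
dyadic pieces at distance `d = 2⁻ʲ` from `1`. On such a piece the weight is comparable to `d ^ β`
and the step `h φ` to `h √d`, and a monotone `f` has total variation there controlled by a
neighbouring average, so `∫ |w Δ f| ^ q ≲ h (∫ |w f| ^ (2 q)) ^ (1 / 2)` over the piece. Only about
`|log h|` pieces matter, and the Cauchy–Schwarz inequality for their sum costs `|log h| ^ (1 / 2)`.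

Lower bound: take the step function with jumps `2 ^ (γ j)` at `1 - 2⁻ʲ` for `j < n`, where
`γ = β + 1 / (2 q)` and `2⁻ⁿ ≈ δ`. The critical exponent `γ` makes every jump contribute about `δ`
to `∫ |w Δ f| ^ q` and every dyadic piece contribute about `1` to `∫ |w f| ^ (2 q)`. The quotient
of norms is therefore `(n δ) ^ (1 / q) / n ^ (1 / (2 q)) ≈ δ ^ (1 / q) |log δ| ^ (1 / (2 q))`, so
the upper bound is attained even without the iterated logarithm.
-/
/-! ### Real powers and logarithms -/

lemma rpow_le_rpow_abs_mul_rpow {c s t : ℝ} (hs : 0 < s) (ht : 0 < t) (hst : s ≤ c * t)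
    (hts : t ≤ c * s) (b : ℝ) : t ^ b ≤ c ^ |b| * s ^ b := by
  have hc : 0 < c := pos_of_mul_pos_left (hs.trans_le hst) ht.le
  rcases le_total 0 b with hb | hb
  · rw [abs_of_nonneg hb, ← Real.mul_rpow hc.le hs.le]
    exact Real.rpow_le_rpow ht.le hts hb
  · have hquot : s / c ≤ t := (div_le_iff₀' hc).2 hst
    calc t ^ b ≤ (s / c) ^ b := Real.rpow_le_rpow_of_nonpos (by positivity) hquot hb
      _ = c ^ |b| * s ^ b := by
        rw [abs_of_nonpos hb, Real.div_rpow hs.le hc.le, Real.rpow_neg hc.le, div_eq_inv_mul]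

lemma enorm_rpow_eq_ofReal (y : ℝ) {s : ℝ} (hs : 0 ≤ s) :
    ‖y‖ₑ ^ s = ENNReal.ofReal (|y| ^ s) := by
  rw [Real.enorm_eq_ofReal_abs, ENNReal.ofReal_rpow_of_nonneg (abs_nonneg _) hs]

lemma one_lt_log_four : 1 < Real.log 4 :=
  (Real.lt_log_iff_exp_lt (by norm_num)).2 (Real.exp_one_lt_three.trans (by norm_num))

lemma log_four_le_abs_log {δ : ℝ} (hδ : 0 < δ) (hδ4 : δ < 1 / 4) :
    Real.log 4 ≤ |Real.log δ| := by
  have hinv : 4 ≤ δ⁻¹ := (le_inv_comm₀ (by norm_num) hδ).2 (by linarith)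
  calc Real.log 4 ≤ Real.log δ⁻¹ := Real.log_le_log (by norm_num) hinv
    _ ≤ |Real.log δ| := Real.log_inv δ ▸ neg_le_abs _

lemma one_le_abs_log {δ : ℝ} (hδ : 0 < δ) (hδ4 : δ < 1 / 4) : 1 ≤ |Real.log δ| :=
  one_lt_log_four.le.trans (log_four_le_abs_log hδ hδ4)

lemma mul_abs_log_le_mul_abs_log {h δ : ℝ} (hh : 0 < h) (hhδ : h ≤ δ) (hδ4 : δ < 1 / 4) :
    h * |Real.log h| ≤ δ * |Real.log δ| := by
  have mem_Ici {x : ℝ} (hx : 0 < x) (hx4 : x < 1 / 4) : x⁻¹ ∈ Ici (Real.exp 1) := by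
    rw [mem_Ici, le_inv_comm₀ (Real.exp_pos 1) hx]
    have := inv_anti₀ (Real.exp_pos 1) Real.exp_one_lt_three.le
    linarith
  have hδ : 0 < δ := hh.trans_le hhδ
  have hanti := Real.log_div_self_antitoneOn (mem_Ici hδ hδ4) (mem_Ici hh (hhδ.trans_lt hδ4))
    (inv_anti₀ hh hhδ)
  rw [abs_of_nonpos (Real.log_nonpos hh.le (by linarith)),
    abs_of_nonpos (Real.log_nonpos hδ.le (by linarith))]
  simpa [Real.log_inv, div_inv_eq_mul, mul_comm] using hanti

lemma mul_sqrt_abs_log_le_mul_sqrt_abs_log {h δ : ℝ} (hh : 0 < h) (hhδ : h ≤ δ)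
    (hδ4 : δ < 1 / 4) : h * √|Real.log h| ≤ δ * √|Real.log δ| := by
  have hδ : 0 < δ := hh.trans_le hhδ
  have sqrt_form {x : ℝ} (hx : 0 < x) : x * √|Real.log x| = √(x * (x * |Real.log x|)) := by
    rw [← mul_assoc, Real.sqrt_mul (by positivity), Real.sqrt_mul_self hx.le]
  rw [sqrt_form hh, sqrt_form hδ]
  exact Real.sqrt_le_sqrt
    (mul_le_mul hhδ (mul_abs_log_le_mul_abs_log hh hhδ hδ4) (by positivity) hδ.le)

lemma sum_rpow_half_le {ι : Type*} (s : Finset ι) (A : ι → ℝ≥0∞) :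
    ∑ j ∈ s, A j ^ (1 / 2 : ℝ) ≤ (s.card * ∑ j ∈ s, A j) ^ (1 / 2 : ℝ) := by
  have hsq := ENNReal.rpow_sum_le_const_mul_sum_rpow (s := s)
    (f := fun j => A j ^ (1 / 2 : ℝ)) (p := 2) (by norm_num)
  simp only [← ENNReal.rpow_mul] at hsq
  norm_num at hsq
  rw [one_div, ENNReal.le_rpow_inv_iff (by norm_num)]
  simpa using hsq

/-! ### Lebesgue integrals over intervals -/

lemma ofReal_mul_sub_le_setLIntegral {G : ℝ → ℝ≥0∞} {v a b : ℝ} {T : Set ℝ} (hv : 0 ≤ v)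
    (hG : ∀ x ∈ Ico a b, ENNReal.ofReal v ≤ G x) (hT : Ico a b ⊆ T) :
    ENNReal.ofReal (v * (b - a)) ≤ ∫⁻ x in T, G x :=
  calc ENNReal.ofReal (v * (b - a)) = ∫⁻ _ in Ico a b, ENNReal.ofReal v := by
        rw [setLIntegral_const, Real.volume_Ico, ENNReal.ofReal_mul hv]
    _ ≤ ∫⁻ x in Ico a b, G x := setLIntegral_mono' measurableSet_Ico hG
    _ ≤ ∫⁻ x in T, G x := lintegral_mono_set hT

section Partition

variable (u : ℕ → ℝ) (μ : Measure ℝ) (G : ℝ → ℝ≥0∞)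

lemma setLIntegral_Ico_le_sum (n : ℕ) :
    ∫⁻ x in Ico (u 0) (u n), G x ∂μ ≤
      ∑ j ∈ Finset.range n, ∫⁻ x in Ico (u j) (u (j + 1)), G x ∂μ := by
  induction n with
  | zero => simp
  | succ n ih =>
    rw [Finset.sum_range_succ]
    exact (lintegral_mono_set Ico_subset_Ico_union_Ico).trans
      ((lintegral_union_le _ _ _).trans (by gcongr))

variable {u}

lemma sum_setLIntegral_le_of_subset_Ico (hu : Monotone u) {E : ℕ → Set ℝ} {T : Set ℝ} {n : ℕ}
    (hE : ∀ j, MeasurableSet (E j)) (hEu : ∀ j < n, E j ⊆ Ico (u j) (u (j + 1)))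
    (hET : ∀ j < n, E j ⊆ T) :
    ∑ j ∈ Finset.range n, ∫⁻ x in E j, G x ∂μ ≤ ∫⁻ x in T, G x ∂μ := by
  have hdisj : (Finset.range n : Set ℕ).PairwiseDisjoint E := fun i hi j hj hij =>
    (hu.pairwise_disjoint_on_Ico_succ hij).mono (hEu i (by simpa using hi))
      (hEu j (by simpa using hj))
  rw [← lintegral_biUnion_finset hdisj fun j _ => hE j]
  exact lintegral_mono_set (iUnion₂_subset fun j hj => hET j (Finset.mem_range.1 hj))

lemma sum_setLIntegral_Ico_add_le (hu : Monotone u) {T : Set ℝ}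
    (hT : ∀ j, Ico (u j) (u (j + 1)) ⊆ T) (m n : ℕ) :
    ∑ j ∈ Finset.range n, ∫⁻ x in Ico (u j) (u (j + m)), G x ∂μ ≤ m * ∫⁻ x in T, G x ∂μ := by
  induction m with
  | zero => simp
  | succ m ih =>
    have hlast : ∑ j ∈ Finset.range n, ∫⁻ x in Ico (u (j + m)) (u (j + m + 1)), G x ∂μ ≤
        ∫⁻ x in T, G x ∂μ :=
      sum_setLIntegral_le_of_subset_Ico (u := fun j => u (j + m)) μ G
        (fun i j hij => hu (by lia)) (fun _ => measurableSet_Ico)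
        (fun j _ => by rw [add_right_comm]) (fun j _ => hT (j + m))
    calc ∑ j ∈ Finset.range n, ∫⁻ x in Ico (u j) (u (j + (m + 1))), G x ∂μ
        ≤ ∑ j ∈ Finset.range n, (∫⁻ x in Ico (u j) (u (j + m)), G x ∂μ +
            ∫⁻ x in Ico (u (j + m)) (u (j + m + 1)), G x ∂μ) :=
          Finset.sum_le_sum fun j _ =>
            (lintegral_mono_set Ico_subset_Ico_union_Ico).trans (lintegral_union_le _ _ _)
      _ ≤ m * ∫⁻ x in T, G x ∂μ + ∫⁻ x in T, G x ∂μ := by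
          rw [Finset.sum_add_distrib]
          exact add_le_add ih hlast
      _ = (m + 1 : ℕ) * ∫⁻ x in T, G x ∂μ := by push_cast; ring

end Partition

lemma setLIntegral_Ico_one_sub_rpow {s ε : ℝ} (hs : -1 < s) (hε : 0 ≤ ε) :
    ∫⁻ x in Ico (1 - ε) 1, ENNReal.ofReal ((1 - x) ^ s) =
      ENNReal.ofReal (ε ^ (s + 1) / (s + 1)) := by
  have hint : IntervalIntegrable (fun x : ℝ => (1 - x) ^ s) volume (1 - ε) 1 := by
    simpa using (intervalIntegral.intervalIntegrable_rpow' (a := ε) (b := 0) hs).comp_sub_left 1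
  rw [setLIntegral_congr Ico_ae_eq_Ioc, ← ofReal_integral_eq_lintegral_ofReal,
    ← intervalIntegral.integral_of_le (by linarith),
    intervalIntegral.integral_comp_sub_left (fun x => x ^ s), integral_rpow (Or.inl hs)]
  · simp [Real.zero_rpow (show s + 1 ≠ 0 by linarith)]
  · exact (intervalIntegrable_iff_integrableOn_Ioc_of_le (by linarith)).1 hint
  · filter_upwards [ae_restrict_mem measurableSet_Ioc] with x hx
    exact Real.rpow_nonneg (by linarith [hx.2]) _

lemma setLIntegral_Ico_one_sub_inv {ε : ℝ} (hε : 0 < ε) (hε1 : ε ≤ 1) :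
    ∫⁻ x in Ico 0 (1 - ε), ENNReal.ofReal (1 - x)⁻¹ = ENNReal.ofReal (-Real.log ε) := by
  have hint : IntervalIntegrable (fun x : ℝ => (1 - x)⁻¹) volume 0 (1 - ε) := by
    refine ContinuousOn.intervalIntegrable (ContinuousOn.inv₀ (by fun_prop) fun x hx => ?_)
    rw [uIcc_of_le (by linarith)] at hx
    linarith [hx.2]
  rw [setLIntegral_congr Ico_ae_eq_Ioc, ← ofReal_integral_eq_lintegral_ofReal,
    ← intervalIntegral.integral_of_le (by linarith),
    intervalIntegral.integral_comp_sub_left (fun x => x⁻¹)]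
  · rw [sub_sub_cancel, sub_zero, integral_inv_of_pos hε one_pos, one_div, Real.log_inv]
  · exact (intervalIntegrable_iff_integrableOn_Ioc_of_le (by linarith)).1 hint
  · filter_upwards [ae_restrict_mem measurableSet_Ioc] with x hx
    exact inv_nonneg.2 (by linarith [hx.2])


/-! ### The Jacobi weight and the step-size function -/

lemma jacobi_nonneg (α β : ℝ) {x : ℝ} (hx : x ∈ Icc (-1 : ℝ) 1) : 0 ≤ jacobi α β x :=
  mul_nonneg (Real.rpow_nonneg (by linarith [hx.1]) _) (Real.rpow_nonneg (by linarith [hx.2]) _)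

lemma jacobi_neg (α β x : ℝ) : jacobi α β (-x) = jacobi β α x := by
  simp only [jacobi, sub_neg_eq_add, ← sub_eq_add_neg, mul_comm]

lemma measurable_jacobi (α β : ℝ) : Measurable (jacobi α β) := by
  unfold jacobi
  fun_prop

lemma jacobi_le_one_sub_rpow (α β : ℝ) {x : ℝ} (hx : x ∈ Icc (-7 / 8 : ℝ) 1) :
    jacobi α β x ≤ 8 ^ |α| * (1 - x) ^ β := by
  have h := rpow_le_rpow_abs_mul_rpow (c := 8) (s := 1) (t := 1 + x) one_pos
    (by linarith [hx.1]) (by linarith [hx.1]) (by linarith [hx.2]) α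
  rw [Real.one_rpow, mul_one] at h
  exact mul_le_mul_of_nonneg_right h (Real.rpow_nonneg (by linarith [hx.2]) _)

/-- The factor by which `jacobi α β x` and `d ^ β` can differ when `x` is bounded away from `-1` and
`1 - x` is comparable to `d` up to a factor of `8`; see `jacobi_le_jacobiRatio_mul` and
`rpow_le_jacobiRatio_mul`. -/
def jacobiRatio (α β : ℝ) : ℝ := 8 ^ |α| * 8 ^ |β|

lemma jacobiRatio_pos (α β : ℝ) : 0 < jacobiRatio α β := by
  unfold jacobiRatio
  positivity

section Comparison

variable {d x : ℝ} (α β : ℝ)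

lemma jacobi_le_jacobiRatio_mul (hd : 0 < d) (hx : x ∈ Ico (-7 / 8 : ℝ) 1) (hdx : d ≤ 8 * (1 - x))
    (hxd : 1 - x ≤ 8 * d) : jacobi α β x ≤ jacobiRatio α β * d ^ β := by
  rw [jacobiRatio, mul_assoc]
  exact (jacobi_le_one_sub_rpow α β (Ico_subset_Icc_self hx)).trans
    (mul_le_mul_of_nonneg_left
      (rpow_le_rpow_abs_mul_rpow hd (sub_pos.2 hx.2) hdx hxd β) (by positivity))

lemma rpow_le_jacobiRatio_mul (hd : 0 < d) (hx : x ∈ Ico (-7 / 8 : ℝ) 1) (hdx : d ≤ 8 * (1 - x))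
    (hxd : 1 - x ≤ 8 * d) : d ^ β ≤ jacobiRatio α β * jacobi α β x := by
  have hone : 1 ≤ 8 ^ |α| * (1 + x) ^ α := by
    simpa using rpow_le_rpow_abs_mul_rpow (c := 8) (s := 1 + x) (t := 1) (by linarith [hx.1])
      one_pos (by linarith [hx.2]) (by linarith [hx.1]) α
  have hβ := rpow_le_rpow_abs_mul_rpow (sub_pos.2 hx.2) hd hxd hdx β
  calc d ^ β = 1 * d ^ β := (one_mul _).symm
    _ ≤ 8 ^ |α| * (1 + x) ^ α * (8 ^ |β| * (1 - x) ^ β) :=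
      mul_le_mul hone hβ (by positivity) (zero_le_one.trans hone)
    _ = jacobiRatio α β * jacobi α β x := by rw [jacobiRatio, jacobi]; ring

end Comparison

lemma phiW_nonneg (x : ℝ) : 0 ≤ phiW x := Real.sqrt_nonneg _

lemma phiW_neg (x : ℝ) : phiW (-x) = phiW x := by simp only [phiW, neg_sq]

lemma mul_phiW_le_one_sub_abs {h x : ℝ} (hx : |x| ≤ 1 - 2 * h ^ 2) :
    h * phiW x ≤ 1 - |x| := by
  have habs := abs_nonneg x
  refine abs_le_of_sq_le_sq' ?_ (by nlinarith) |>.2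
  rw [mul_pow, phiW, Real.sq_sqrt (by nlinarith [sq_abs x]), ← sq_abs x]
  nlinarith [mul_nonneg (show 0 ≤ 1 - |x| - 2 * h ^ 2 by linarith) (show 0 ≤ 1 - |x| by nlinarith),
    mul_nonneg (sq_nonneg h) (sq_nonneg (1 - |x|))]

lemma phiW_le_two_mul_sqrt {d x : ℝ} (hd : 0 ≤ d) (hx : x ∈ Icc (-1) 1) (hxd : 1 - x ≤ d) :
    phiW x ≤ 2 * √d := by
  refine Real.sqrt_le_iff.2 ⟨by positivity, ?_⟩
  rw [mul_pow, Real.sq_sqrt hd]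
  nlinarith [hx.1, hx.2]

lemma sqrt_div_two_le_phiW {d x : ℝ} (hx : x ∈ Icc (-1 / 2) 1) (hdx : d ≤ 1 - x) :
    √d / 2 ≤ phiW x := by
  rw [show (2 : ℝ) = √(2 ^ 2) by norm_num, ← Real.sqrt_div' _ (by norm_num)]
  exact Real.sqrt_le_sqrt (by nlinarith [hx.1, hx.2])

/-! ### Differences, moduli and norms -/

lemma kMonotoneOn_one_iff {f : ℝ → ℝ} :
    kMonotoneOn 1 f ↔ MonotoneOn f (Ioo (-1 : ℝ) 1) := by
  have dividedDiff (x : Fin 2 → ℝ) : ∑ i, f (x i) / ∏ j ∈ Finset.univ.erase i, (x i - x j) =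
      (f (x 1) - f (x 0)) / (x 1 - x 0) := by
    rw [Fin.sum_univ_two, show Finset.univ.erase (0 : Fin 2) = {1} from rfl,
      show Finset.univ.erase (1 : Fin 2) = {0} from rfl, Finset.prod_singleton,
      Finset.prod_singleton, ← neg_sub (x 1) (x 0), div_neg]
    ring
  refine ⟨fun hf => monotoneOn_iff_forall_lt.2 fun a ha b hb hab => ?_, fun hf x _ hx => ?_⟩
  · have h := hf ![a, b] (by simp [Fin.forall_fin_two, Function.Injective, hab.ne, hab.ne'])
      (by simp [Fin.forall_fin_two, ha.1, ha.2, hb.1, hb.2])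
    rw [dividedDiff] at h
    simpa using (le_div_iff₀ (sub_pos.2 hab)).1 h
  · rw [dividedDiff]
    rcases le_total (x 0) (x 1) with h | h
    · exact div_nonneg (sub_nonneg.2 (hf (hx 0) (hx 1) h)) (sub_nonneg.2 h)
    · exact div_nonneg_of_nonpos (sub_nonpos.2 (hf (hx 1) (hx 0) h)) (sub_nonpos.2 h)

lemma symmDelta_one_of_mem {h x : ℝ} (f : ℝ → ℝ) (hl : x - h / 2 ∈ Icc (-1 : ℝ) 1)
    (hr : x + h / 2 ∈ Icc (-1 : ℝ) 1) :
    symmDelta 1 h f x = f (x + h / 2) - f (x - h / 2) := by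
  rw [symmDelta, if_pos (by simpa using And.intro hl hr)]
  have hend : x - h / 2 + h = x + h / 2 := by ring
  simp [Finset.sum_range_succ, hend, neg_add_eq_sub]

lemma symmDelta_const_mul (k : ℕ) (h t : ℝ) (f : ℝ → ℝ) (x : ℝ) :
    symmDelta k h (fun y => t * f y) x = t * symmDelta k h f x := by
  simp only [symmDelta, mul_ite, mul_zero, Finset.mul_sum]
  simp only [mul_left_comm]

lemma LpOn_const_mul (t : ℝ) (g : ℝ → ℝ) (p : ℝ≥0∞) (a b : ℝ) :
    LpOn (fun x => t * g x) p a b = ‖t‖ₑ * LpOn g p a b :=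
  eLpNorm_const_smul t g p _

lemma LpOn_weight_mul_const_mul (wt g : ℝ → ℝ) (t : ℝ) (p : ℝ≥0∞) (a b : ℝ) :
    LpOn (fun x => wt x * (t * g x)) p a b = ‖t‖ₑ * LpOn (fun x => wt x * g x) p a b := by
  simpa only [mul_left_comm] using LpOn_const_mul t (fun x => wt x * g x) p a b

lemma omegaDT_const_mul (k : ℕ) (t : ℝ) (f : ℝ → ℝ) (δ : ℝ) (wt : ℝ → ℝ) (p : ℝ≥0∞) :
    omegaDT k (fun y => t * f y) δ wt p = ‖t‖ₑ * omegaDT k f δ wt p := by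
  simp only [omegaDT, OmegaMain, OmegaFwd, OmegaBwd, symmDelta_const_mul,
    LpOn_weight_mul_const_mul, mul_add, ENNReal.mul_iSup]

lemma kMonotoneOn_const_mul {k : ℕ} {t : ℝ} {f : ℝ → ℝ} (hf : kMonotoneOn k f) (ht : 0 ≤ t) :
    kMonotoneOn k (fun y => t * f y) := fun x hinj hx => by
  simpa only [mul_div_assoc, Finset.mul_sum] using mul_nonneg ht (hf x hinj hx)

lemma LpOn_eq_lintegral (g : ℝ → ℝ) {p : ℝ≥0∞} (hp0 : p ≠ 0) (hp : p ≠ ∞) (a b : ℝ) :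
    LpOn g p a b = (∫⁻ x in Icc a b, ‖g x‖ₑ ^ p.toReal) ^ (1 / p.toReal) :=
  eLpNorm_eq_lintegral_rpow_enorm_toReal hp0 hp

lemma LpOn_comp_neg (g : ℝ → ℝ) (p : ℝ≥0∞) (a b : ℝ) :
    LpOn (fun x => g (-x)) p a b = LpOn g p (-b) (-a) := by
  have hneg : MeasurableEmbedding (Neg.neg : ℝ → ℝ) := (MeasurableEquiv.neg ℝ).measurableEmbedding
  have hmap := ((Measure.measurePreserving_neg (volume : Measure ℝ)).restrict_preimage_emb
    hneg (Icc (-b) (-a))).map_eq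
  rw [neg_preimage, neg_Icc, neg_neg, neg_neg] at hmap
  rw [LpOn, LpOn, ← hmap, hneg.eLpNorm_map_measure]
  rfl

/-- The reflection of `f` through the origin. It preserves monotonicity and interchanges the two
endpoints of `[-1, 1]`. -/
def reflect (f : ℝ → ℝ) (x : ℝ) : ℝ := -f (-x)

lemma monotoneOn_reflect {f : ℝ → ℝ} (hf : MonotoneOn f (Ioo (-1 : ℝ) 1)) :
    MonotoneOn (reflect f) (Ioo (-1 : ℝ) 1) := fun x hx y hy hxy =>
  neg_le_neg (hf ⟨by linarith [hy.2], by linarith [hy.1]⟩ ⟨by linarith [hx.2], by linarith [hx.1]⟩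
    (neg_le_neg hxy))

lemma symmDelta_reflect (k : ℕ) (h : ℝ) (f : ℝ → ℝ) (x : ℝ) :
    symmDelta k h (reflect f) x = (-1) ^ (k + 1) * symmDelta k h f (-x) := by
  have hmem : (x - k * h / 2 ∈ Icc (-1 : ℝ) 1 ∧ x + k * h / 2 ∈ Icc (-1 : ℝ) 1) ↔
      (-x - k * h / 2 ∈ Icc (-1 : ℝ) 1 ∧ -x + k * h / 2 ∈ Icc (-1 : ℝ) 1) := by
    simp only [mem_Icc]
    constructor <;> rintro ⟨⟨_, _⟩, _, _⟩ <;> refine ⟨⟨?_, ?_⟩, ?_, ?_⟩ <;> linarith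
  simp only [symmDelta, hmem, mul_ite, mul_zero]
  congr 1
  rw [← Finset.sum_range_reflect, Finset.mul_sum]
  refine Finset.sum_congr rfl fun i hi => ?_
  obtain ⟨m, rfl⟩ := Nat.exists_eq_add_of_le (Nat.lt_succ_iff.1 (Finset.mem_range.1 hi))
  have hsign : (-1 : ℝ) ^ (i + m + 1) * (-1) ^ m = -(-1) ^ i := by
    rw [pow_succ, pow_add, mul_neg_one, neg_mul, mul_assoc, ← mul_pow]
    simp
  have harg : -(x - (i + m : ℕ) * h / 2 + m * h) = -x - (i + m : ℕ) * h / 2 + i * h := by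
    push_cast
    ring
  simp only [Nat.add_sub_cancel, Nat.add_sub_cancel_left, reflect, harg, ← Nat.choose_symm_add]
  linear_combination -((i + m).choose i * f (-x - (i + m : ℕ) * h / 2 + i * h)) * hsign

lemma LpOn_mul_symmDelta_reflect (k : ℕ) (wt step base f : ℝ → ℝ) (p : ℝ≥0∞) (a b : ℝ) :
    LpOn (fun x => wt (-x) * symmDelta k (step (-x)) (reflect f) (-base (-x))) p a b =
      LpOn (fun x => wt x * symmDelta k (step x) f (base x)) p (-b) (-a) := by
  rw [← LpOn_comp_neg]
  refine eLpNorm_congr_enorm_ae (Eventually.of_forall fun x => ?_)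
  simp only [symmDelta_reflect, neg_neg, enorm_mul, enorm_pow, enorm_neg, enorm_one, one_pow,
    one_mul]

lemma LpOn_mul_reflect (wt f : ℝ → ℝ) (p : ℝ≥0∞) (a b : ℝ) :
    LpOn (fun x => wt (-x) * reflect f x) p a b = LpOn (fun x => wt x * f x) p (-b) (-a) := by
  rw [← LpOn_comp_neg]
  refine eLpNorm_congr_enorm_ae (Eventually.of_forall fun x => ?_)
  simp only [reflect, enorm_mul, enorm_neg]

lemma OmegaFwd_eq_OmegaBwd_reflect (k : ℕ) (f : ℝ → ℝ) (δ : ℝ) (wt : ℝ → ℝ) (p : ℝ≥0∞) :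
    OmegaFwd k f δ wt p = OmegaBwd k (reflect f) δ (fun x => wt (-x)) p := by
  refine iSup_congr fun h => iSup_congr fun _ => ?_
  have hreflect := LpOn_mul_symmDelta_reflect k wt (fun _ => h) (fun x => x + k * h / 2) f p
    (1 - 2 * (k : ℝ) ^ 2 * δ ^ 2) 1
  rw [neg_sub', sub_neg_eq_add] at hreflect
  rw [← hreflect]
  congr! 4
  ring

lemma omegaDT_div_LpOn_le_iSup {p : ℝ≥0∞} {α β : ℝ} {k : ℕ} {f : ℝ → ℝ}
    (hfm : Measurable f) (hf : kMonotoneOn k f)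
    (hzero : LpOn (fun x => jacobi α β x * f x) p (-1) 1 ≠ 0)
    (htop : LpOn (fun x => jacobi α β x * f x) p (-1) 1 ≠ ∞) (δ : ℝ) (q : ℝ≥0∞) :
    omegaDT k f δ (jacobi α β) q / LpOn (fun x => jacobi α β x * f x) p (-1) 1 ≤
      ⨆ g ∈ BSet p α β ∩ MSet k, omegaDT k g δ (jacobi α β) q := by
  set N := LpOn (fun x => jacobi α β x * f x) p (-1) 1
  have hinv : ‖N.toReal⁻¹‖ₑ = N⁻¹ := by
    rw [enorm_inv (ENNReal.toReal_ne_zero.2 ⟨hzero, htop⟩), Real.enorm_of_nonneg (by positivity),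
      ENNReal.ofReal_toReal htop]
  have hunit : (fun x => N.toReal⁻¹ * f x) ∈ BSet p α β :=
    ⟨hfm.const_mul _, by
      rw [LpOn_weight_mul_const_mul, hinv, ENNReal.inv_mul_cancel hzero htop]⟩
  have hmono : (fun x => N.toReal⁻¹ * f x) ∈ MSet k := kMonotoneOn_const_mul hf (by positivity)
  calc omegaDT k f δ (jacobi α β) q / N
      = omegaDT k (fun x => N.toReal⁻¹ * f x) δ (jacobi α β) q := by
        rw [omegaDT_const_mul, hinv, ENNReal.div_eq_inv_mul]
    _ ≤ _ := le_iSup₂ (f := fun g (_ : g ∈ BSet p α β ∩ MSet k) => omegaDT k g δ (jacobi α β) q)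
        _ ⟨hunit, hmono⟩

/-! ### Monotone functions at a fixed distance from the endpoint -/

lemma exists_Ico_abs_le_abs {f : ℝ → ℝ} {a b c l : ℝ} (hf : MonotoneOn f (Ico a b)) (hl : 0 < l)
    (hac : a ≤ c - l) (hcb : c + l ≤ b) :
    ∃ y, Ico y (y + l) ⊆ Ico a b ∧ ∀ x ∈ Ico y (y + l), |f c| ≤ |f x| := by
  have hc : c ∈ Ico a b := ⟨by linarith, by linarith⟩
  rcases le_total 0 (f c) with hfc | hfc
  · have hsub : Ico c (c + l) ⊆ Ico a b := Ico_subset_Ico hc.1 hcb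
    exact ⟨c, hsub, fun x hx => abs_le_abs_of_nonneg hfc (hf hc (hsub hx) hx.1)⟩
  · have hsub : Ico (c - l) (c - l + l) ⊆ Ico a b := Ico_subset_Ico hac (by linarith [hc.2])
    refine ⟨c - l, hsub, fun x hx => abs_le_abs_of_nonpos hfc (hf (hsub hx) hc ?_)⟩
    linarith [hx.2]

lemma ofReal_rpow_mul_le_setLIntegral_jacobi_mul {α β s d c : ℝ} {f : ℝ → ℝ}
    (hf : MonotoneOn f (Ioo (-1 : ℝ) 1)) (hs : 0 ≤ s) (hd : 0 < d) (hd1 : d ≤ 1)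
    (hc : c ∈ Icc (1 - 3 / 2 * d) (1 - d / 4)) :
    ENNReal.ofReal ((d ^ β * |f c|) ^ s * d) ≤ ENNReal.ofReal (8 * jacobiRatio α β ^ s) *
      ∫⁻ x in Ico (1 - 2 * d) (1 - d / 8), ‖jacobi α β x * f x‖ₑ ^ s := by
  have hK := jacobiRatio_pos α β
  obtain ⟨y, hsub, hy⟩ := exists_Ico_abs_le_abs (a := 1 - 7 / 4 * d) (b := 1 - d / 8) (c := c)
    (l := d / 8) (hf.mono fun x hx => ⟨by linarith [hx.1], by linarith [hx.2]⟩) (by positivity)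
    (by linarith [hc.1]) (by linarith [hc.2])
  have hpoint : ∀ x ∈ Ico y (y + d / 8), ENNReal.ofReal ((d ^ β * |f c|) ^ s) ≤
      ENNReal.ofReal (jacobiRatio α β ^ s) * ‖jacobi α β x * f x‖ₑ ^ s := fun x hx => by
    obtain ⟨hx1, hx2⟩ := hsub hx
    have hw := jacobi_nonneg α β (x := x) ⟨by linarith, by linarith⟩
    have hdw := rpow_le_jacobiRatio_mul α β hd (x := x) ⟨by linarith, by linarith⟩
      (by linarith) (by linarith)
    rw [enorm_rpow_eq_ofReal _ hs, ← ENNReal.ofReal_mul (by positivity),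
      ← Real.mul_rpow hK.le (abs_nonneg _), abs_mul, abs_of_nonneg hw, ← mul_assoc]
    gcongr ENNReal.ofReal (?_ ^ s)
    exact mul_le_mul hdw (hy x hx) (abs_nonneg _) (by positivity)
  calc ENNReal.ofReal ((d ^ β * |f c|) ^ s * d)
      = 8 * ENNReal.ofReal ((d ^ β * |f c|) ^ s * (y + d / 8 - y)) := by
        rw [← ENNReal.ofReal_ofNat 8, ← ENNReal.ofReal_mul (by norm_num)]
        congr 1
        ring
    _ ≤ 8 * ∫⁻ x in Ico (1 - 2 * d) (1 - d / 8),
          ENNReal.ofReal (jacobiRatio α β ^ s) * ‖jacobi α β x * f x‖ₑ ^ s := by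
        gcongr
        exact ofReal_mul_sub_le_setLIntegral (by positivity) hpoint
          (hsub.trans (Ico_subset_Ico (by linarith) le_rfl))
    _ = _ := by
        rw [lintegral_const_mul' _ _ ENNReal.ofReal_ne_top, ← mul_assoc,
          ENNReal.ofReal_mul (by norm_num), ENNReal.ofReal_ofNat]

lemma setLIntegral_Ioc_sub_translate_le {g : ℝ → ℝ} {S H : ℝ} (hg : Monotone g)
    (hS : ∀ x, |g x| ≤ S) (hH : 0 ≤ H) {a b : ℝ} (hab : a ≤ b) :
    ∫⁻ x in Ioc a b, ENNReal.ofReal (g (x + H) - g (x - H)) ≤ ENNReal.ofReal (4 * H * S) := by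
  have hint (u v : ℝ) : IntervalIntegrable g volume u v := hg.intervalIntegrable
  have hintR : IntervalIntegrable (fun x => g (x + H)) volume a b :=
    (hg.comp (add_left_mono (a := H))).intervalIntegrable
  have hintL : IntervalIntegrable (fun x => g (x - H)) volume a b :=
    (hg.comp fun x y hxy => sub_le_sub_right hxy H).intervalIntegrable
  have hend (c : ℝ) : |∫ x in (c + H)..(c - H), g x| ≤ 2 * H * S := by
    have h := intervalIntegral.norm_integral_le_of_norm_le_const (a := c + H) (b := c - H)
      (f := g) fun x _ => hS x
    rwa [show c - H - (c + H) = -(2 * H) by ring, abs_neg, abs_of_nonneg (by linarith),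
      mul_comm] at h
  rw [← ofReal_integral_eq_lintegral_ofReal]
  · rw [← intervalIntegral.integral_of_le hab, intervalIntegral.integral_sub hintR hintL,
      intervalIntegral.integral_comp_add_right, intervalIntegral.integral_comp_sub_right,
      intervalIntegral.integral_interval_sub_interval_comm (hint _ _) (hint _ _) (hint _ _)]
    refine ENNReal.ofReal_le_ofReal ?_
    linarith [le_abs_self (∫ x in (a + H)..(a - H), g x), hend a,
      neg_le_abs (∫ x in (b + H)..(b - H), g x), hend b]
  · exact (intervalIntegrable_iff_integrableOn_Ioc_of_le hab).1 (hintR.sub hintL)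
  · exact Eventually.of_forall fun x => sub_nonneg.2 (hg (by linarith))

lemma rpow_le_rpow_sub_one_mul {x y z r : ℝ} (hx : 0 ≤ x) (hxy : x ≤ y) (hxz : x ≤ z)
    (hr : 1 ≤ r) : x ^ r ≤ y ^ (r - 1) * z :=
  calc x ^ r = x ^ (r - 1) * x := by
        rw [← Real.rpow_add_one' hx (by linarith), sub_add_cancel]
    _ ≤ y ^ (r - 1) * z :=
        mul_le_mul (Real.rpow_le_rpow hx hxy (by linarith)) hxz hx
          (Real.rpow_nonneg (hx.trans hxy) _)

lemma setLIntegral_rpow_sub_le_of_monotoneOn {f ψ : ℝ → ℝ} {a b S H r : ℝ} {E : Set ℝ}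
    (hf : MonotoneOn f (Icc a b)) (hab : a ≤ b) (ha : |f a| ≤ S) (hb : |f b| ≤ S)
    (hE : MeasurableSet E) (hψ : ∀ x ∈ E, ψ x ∈ Icc 0 H)
    (hmem : ∀ x ∈ E, x - ψ x ∈ Icc a b ∧ x + ψ x ∈ Icc a b) (hH : 0 ≤ H) (hr : 1 ≤ r) :
    ∫⁻ x in E, ENNReal.ofReal ((f (x + ψ x) - f (x - ψ x)) ^ r) ≤
      ENNReal.ofReal (2 * H * (2 * S) ^ r) := by
  have hS : 0 ≤ S := (abs_nonneg _).trans ha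
  set g : ℝ → ℝ := fun x => f (projIcc a b hab x)
  have hg : Monotone g := fun x y hxy =>
    hf (projIcc a b hab x).2 (projIcc a b hab y).2 (monotone_projIcc hab hxy)
  have hfg : ∀ x ∈ Icc a b, f x = g x := fun x hx => by simp only [g, projIcc_of_mem hab hx]
  have hgS (x : ℝ) : |g x| ≤ S := by
    have hx := (projIcc a b hab x).2
    have hlo := hf (left_mem_Icc.2 hab) hx hx.1
    have hhi := hf hx (right_mem_Icc.2 hab) hx.2
    exact abs_le.2 ⟨by linarith [neg_abs_le (f a)], by linarith [le_abs_self (f b)]⟩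
  have hpoint : ∀ x ∈ E, ENNReal.ofReal ((f (x + ψ x) - f (x - ψ x)) ^ r) ≤
      ENNReal.ofReal ((2 * S) ^ (r - 1)) * ENNReal.ofReal (g (x + H) - g (x - H)) := fun x hx => by
    rw [hfg _ (hmem x hx).1, hfg _ (hmem x hx).2, ← ENNReal.ofReal_mul (by positivity)]
    set D := g (x + ψ x) - g (x - ψ x)
    obtain ⟨hψ0, hψH⟩ := hψ x hx
    have hD0 : 0 ≤ D := sub_nonneg.2 (hg (by linarith))
    have hDS : D ≤ 2 * S := by
      linarith [(abs_le.1 (hgS (x + ψ x))).2, (abs_le.1 (hgS (x - ψ x))).1]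
    have hDH : D ≤ g (x + H) - g (x - H) := sub_le_sub (hg (by linarith)) (hg (by linarith))
    exact ENNReal.ofReal_le_ofReal (rpow_le_rpow_sub_one_mul hD0 hDS hDH hr)
  have hEab : E ⊆ Icc a b := fun x hx =>
    ⟨by linarith [(hψ x hx).1, (hmem x hx).1.1], by linarith [(hψ x hx).1, (hmem x hx).2.2]⟩
  calc ∫⁻ x in E, ENNReal.ofReal ((f (x + ψ x) - f (x - ψ x)) ^ r)
      ≤ ∫⁻ x in E, ENNReal.ofReal ((2 * S) ^ (r - 1)) * ENNReal.ofReal (g (x + H) - g (x - H)) :=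
        setLIntegral_mono' hE hpoint
    _ ≤ ENNReal.ofReal ((2 * S) ^ (r - 1)) * ENNReal.ofReal (4 * H * S) := by
        rw [lintegral_const_mul' _ _ ENNReal.ofReal_ne_top]
        gcongr
        exact (lintegral_mono_set hEab).trans ((setLIntegral_congr Ioc_ae_eq_Icc.symm).trans_le
          (setLIntegral_Ioc_sub_translate_le hg hgS hH hab))
    _ = ENNReal.ofReal (2 * H * ((2 * S) ^ (r - 1) * (2 * S))) := by
        rw [← ENNReal.ofReal_mul (by positivity)]
        congr 1
        ring
    _ = ENNReal.ofReal (2 * H * (2 * S) ^ r) := by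
        rw [← Real.rpow_add_one' (by positivity) (by linarith), sub_add_cancel]

lemma sub_mem_Icc_and_add_mem_Icc_of_le_one_sub {d t x : ℝ} (hx : x ∈ Ico (1 - d) (1 - d / 2))
    (ht : t ∈ Icc 0 (1 - x)) : x - t / 2 ∈ Icc (1 - 3 / 2 * d) (1 - d / 4) ∧
      x + t / 2 ∈ Icc (1 - 3 / 2 * d) (1 - d / 4) := by
  obtain ⟨⟨hx1, hx2⟩, ht0, ht1⟩ := And.intro hx ht
  refine ⟨⟨?_, ?_⟩, ?_, ?_⟩ <;> linarith

lemma enorm_jacobi_mul_symmDelta_one_rpow_le {α β r d t x : ℝ} {f : ℝ → ℝ}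
    (hf : MonotoneOn f (Ioo (-1 : ℝ) 1)) (hr : 0 ≤ r) (hd : 0 < d) (hd1 : d ≤ 1)
    (hx : x ∈ Ico (1 - d) (1 - d / 2)) (ht : t ∈ Icc 0 (1 - x)) :
    ‖jacobi α β x * symmDelta 1 t f x‖ₑ ^ r ≤ ENNReal.ofReal ((jacobiRatio α β * d ^ β) ^ r) *
      ENNReal.ofReal ((f (x + t / 2) - f (x - t / 2)) ^ r) := by
  obtain ⟨hx1, hx2⟩ := hx
  obtain ⟨hlo, hhi⟩ := sub_mem_Icc_and_add_mem_Icc_of_le_one_sub ⟨hx1, hx2⟩ ht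
  have hlo' : x - t / 2 ∈ Ioo (-1 : ℝ) 1 := ⟨by linarith [hlo.1], by linarith [hlo.2]⟩
  have hhi' : x + t / 2 ∈ Ioo (-1 : ℝ) 1 := ⟨by linarith [hhi.1], by linarith [hhi.2]⟩
  have hK := jacobiRatio_pos α β
  have hw0 := jacobi_nonneg α β (x := x) ⟨by linarith, by linarith⟩
  have hw := jacobi_le_jacobiRatio_mul α β hd (x := x) ⟨by linarith, by linarith⟩
    (by linarith) (by linarith)
  have hD : 0 ≤ f (x + t / 2) - f (x - t / 2) := sub_nonneg.2 (hf hlo' hhi' (by linarith [ht.1]))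
  rw [symmDelta_one_of_mem f (Ioo_subset_Icc_self hlo') (Ioo_subset_Icc_self hhi'),
    enorm_rpow_eq_ofReal _ hr, ← ENNReal.ofReal_mul (by positivity),
    ← Real.mul_rpow (by positivity) hD, abs_of_nonneg (mul_nonneg hw0 hD)]
  gcongr

lemma setLIntegral_jacobi_mul_symmDelta_Ico_le_of_abs_le {α β r d h S : ℝ} {f : ℝ → ℝ}
    (hf : MonotoneOn f (Ioo (-1 : ℝ) 1)) (hr : 1 ≤ r) (hd : 0 < d) (hd1 : d ≤ 1) (hh : 0 ≤ h)
    (hleft : |f (1 - 3 / 2 * d)| ≤ S) (hright : |f (1 - d / 4)| ≤ S) :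
    ∫⁻ x in Ico (1 - d) (1 - d / 2) ∩ Iic (1 - 2 * h ^ 2),
        ‖jacobi α β x * symmDelta 1 (h * phiW x) f x‖ₑ ^ r ≤
      ENNReal.ofReal (2 ^ (r + 1) * jacobiRatio α β ^ r * h * ((d ^ β * S) ^ r * √d)) := by
  have hK := jacobiRatio_pos α β
  have hS : 0 ≤ S := (abs_nonneg _).trans hleft
  set E := Ico (1 - d) (1 - d / 2) ∩ Iic (1 - 2 * h ^ 2)
  have hE : MeasurableSet E := measurableSet_Ico.inter measurableSet_Iic
  have hstep : ∀ x ∈ E, h * phiW x ∈ Icc 0 (1 - x) := by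
    rintro x ⟨hx, hxh⟩
    have habs : |x| = x := abs_of_nonneg (by linarith [hx.1])
    exact ⟨mul_nonneg hh (phiW_nonneg x), by
      simpa only [habs] using mul_phiW_le_one_sub_abs (h := h) (x := x) (by rwa [habs])⟩
  have hhalf : ∀ x ∈ E, h * phiW x / 2 ∈ Icc 0 (h * √d) := fun x hx => by
    obtain ⟨hx1, hx2⟩ := hx.1
    have hφ := phiW_le_two_mul_sqrt hd.le (x := x) ⟨by linarith, by linarith⟩ (by linarith)
    exact ⟨by linarith [(hstep x hx).1], by nlinarith⟩
  calc ∫⁻ x in E, ‖jacobi α β x * symmDelta 1 (h * phiW x) f x‖ₑ ^ r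
      ≤ ∫⁻ x in E, ENNReal.ofReal ((jacobiRatio α β * d ^ β) ^ r) *
          ENNReal.ofReal ((f (x + h * phiW x / 2) - f (x - h * phiW x / 2)) ^ r) :=
        setLIntegral_mono' hE fun x hx => enorm_jacobi_mul_symmDelta_one_rpow_le hf
          (by linarith) hd hd1 hx.1 (hstep x hx)
    _ ≤ ENNReal.ofReal ((jacobiRatio α β * d ^ β) ^ r) *
          ENNReal.ofReal (2 * (h * √d) * (2 * S) ^ r) := by
        rw [lintegral_const_mul' _ _ ENNReal.ofReal_ne_top]
        gcongr
        exact setLIntegral_rpow_sub_le_of_monotoneOn (ψ := fun x => h * phiW x / 2)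
          (hf.mono fun x hx => ⟨by linarith [hx.1], by linarith [hx.2]⟩) (by linarith) hleft hright
          hE hhalf (fun x hx => sub_mem_Icc_and_add_mem_Icc_of_le_one_sub hx.1 (hstep x hx))
          (by positivity) hr
    _ = _ := by
        rw [← ENNReal.ofReal_mul (by positivity), Real.mul_rpow hK.le (by positivity),
          Real.mul_rpow (by positivity) hS, Real.mul_rpow (by positivity) hS,
          Real.rpow_add_one (by norm_num)]
        congr 1
        ring

/-- The constant in the local estimate `setLIntegral_jacobi_mul_symmDelta_Ico_le`, whose point is
that it does not depend on the distance `d` to the endpoint. -/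
def localConst (α β r : ℝ) : ℝ :=
  2 ^ (r + 1) * jacobiRatio α β ^ r * √(8 * jacobiRatio α β ^ (2 * r))

lemma localConst_pos (α β r : ℝ) : 0 < localConst α β r := by
  have hK := jacobiRatio_pos α β
  unfold localConst
  positivity

lemma setLIntegral_jacobi_mul_symmDelta_Ico_le {α β r d h : ℝ} {f : ℝ → ℝ}
    (hf : MonotoneOn f (Ioo (-1 : ℝ) 1)) (hr : 1 ≤ r) (hd : 0 < d) (hd1 : d ≤ 1) (hh : 0 ≤ h) :
    ∫⁻ x in Ico (1 - d) (1 - d / 2) ∩ Iic (1 - 2 * h ^ 2),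
        ‖jacobi α β x * symmDelta 1 (h * phiW x) f x‖ₑ ^ r ≤
      ENNReal.ofReal (localConst α β r * h) *
        (∫⁻ x in Ico (1 - 2 * d) (1 - d / 8), ‖jacobi α β x * f x‖ₑ ^ (2 * r)) ^ (1 / 2 : ℝ) := by
  have hK := jacobiRatio_pos α β
  obtain ⟨c, hc, hleft, hright⟩ : ∃ c ∈ Icc (1 - 3 / 2 * d) (1 - d / 4),
      |f (1 - 3 / 2 * d)| ≤ |f c| ∧ |f (1 - d / 4)| ≤ |f c| := by
    rcases le_total |f (1 - 3 / 2 * d)| |f (1 - d / 4)| with hle | hle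
    · exact ⟨_, right_mem_Icc.2 (by linarith), hle, le_rfl⟩
    · exact ⟨_, left_mem_Icc.2 (by linarith), le_rfl, hle⟩
  have hsqrt : (d ^ β * |f c|) ^ r * √d = ((d ^ β * |f c|) ^ (2 * r) * d) ^ (1 / 2 : ℝ) := by
    rw [Real.mul_rpow (by positivity) hd.le, ← Real.rpow_mul (by positivity),
      ← Real.sqrt_eq_rpow]
    ring_nf
  refine (setLIntegral_jacobi_mul_symmDelta_Ico_le_of_abs_le hf hr hd hd1 hh hleft hright).trans ?_
  calc ENNReal.ofReal (2 ^ (r + 1) * jacobiRatio α β ^ r * h * ((d ^ β * |f c|) ^ r * √d))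
      = ENNReal.ofReal (2 ^ (r + 1) * jacobiRatio α β ^ r * h) *
          ENNReal.ofReal ((d ^ β * |f c|) ^ (2 * r) * d) ^ (1 / 2 : ℝ) := by
        rw [hsqrt, ENNReal.ofReal_mul (by positivity),
          ENNReal.ofReal_rpow_of_nonneg (by positivity) (by norm_num)]
    _ ≤ ENNReal.ofReal (2 ^ (r + 1) * jacobiRatio α β ^ r * h) *
          (ENNReal.ofReal (8 * jacobiRatio α β ^ (2 * r)) *
            ∫⁻ x in Ico (1 - 2 * d) (1 - d / 8),
              ‖jacobi α β x * f x‖ₑ ^ (2 * r)) ^ (1 / 2 : ℝ) := by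
        gcongr
        exact ofReal_rpow_mul_le_setLIntegral_jacobi_mul hf (by linarith) hd hd1 hc
    _ = _ := by
        rw [ENNReal.mul_rpow_of_nonneg _ _ (by norm_num), ← mul_assoc,
          ENNReal.ofReal_rpow_of_nonneg (by positivity) (by norm_num),
          ← ENNReal.ofReal_mul (by positivity), ← Real.sqrt_eq_rpow]
        congr 2
        rw [localConst]
        ring

/-! ### Summation over dyadic pieces -/

/-- The nodes `-1, 0, 1/2, 3/4, …` of the dyadic partition of `[-1, 1)`. -/
def dyadicNode (k : ℕ) : ℝ := 1 - 2 * (1 / 2) ^ k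

lemma dyadicNode_add (j m : ℕ) : dyadicNode (j + m) = 1 - (1 / 2) ^ j * (2 * (1 / 2) ^ m) := by
  rw [dyadicNode, pow_add]
  ring

lemma dyadicNode_mono : Monotone dyadicNode := fun i j hij => by
  have h := pow_le_pow_of_le_one (by norm_num : (0 : ℝ) ≤ 1 / 2) (by norm_num) hij
  unfold dyadicNode
  linarith

lemma Ico_dyadicNode_subset (j : ℕ) :
    Ico (dyadicNode j) (dyadicNode (j + 1)) ⊆ Icc (-1 : ℝ) 1 := fun x hx => by
  have hnode : -1 ≤ dyadicNode j := by
    rw [dyadicNode]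
    linarith [pow_le_one₀ (n := j) (by norm_num : (0 : ℝ) ≤ 1 / 2) (by norm_num)]
  have hsucc : dyadicNode (j + 1) ≤ 1 := by
    rw [dyadicNode]
    linarith [show (0 : ℝ) < (1 / 2) ^ (j + 1) by positivity]
  exact ⟨hnode.trans hx.1, hx.2.le.trans hsucc⟩

lemma exists_nat_half_pow_lt_two_mul_sq {h : ℝ} (hh : 0 < h) (hh1 : h ≤ 1) :
    ∃ n : ℕ, (1 / 2) ^ n < 2 * h ^ 2 ∧ n ≤ 4 * |Real.log h| := by
  obtain ⟨n, hlt, hle⟩ := exists_nat_pow_near_of_lt_one (x := h ^ 2) (y := 1 / 2)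
    (by positivity) (pow_le_one₀ hh.le hh1) (by norm_num) (by norm_num)
  refine ⟨n, by rw [pow_succ] at hlt; linarith, ?_⟩
  have hlog := Real.log_le_log (by positivity) hle
  rw [Real.log_pow, Real.log_pow, one_div, Real.log_inv] at hlog
  rw [abs_of_nonpos (Real.log_nonpos hh.le hh1)]
  push_cast at hlog
  nlinarith [Real.log_two_gt_d9, n.cast_nonneg (α := ℝ)]

section DyadicSum

variable {r h : ℝ} {f : ℝ → ℝ}

lemma setLIntegral_jacobi_mul_symmDelta_dyadic_le (α β : ℝ) (hf : MonotoneOn f (Ioo (-1 : ℝ) 1))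
    (hr : 1 ≤ r) (hh : 0 ≤ h) (j : ℕ) :
    ∫⁻ x in Ico (dyadicNode (j + 1)) (dyadicNode (j + 2)) ∩ Iic (1 - 2 * h ^ 2),
        ‖jacobi α β x * symmDelta 1 (h * phiW x) f x‖ₑ ^ r ≤
      ENNReal.ofReal (localConst α β r * h) *
        (∫⁻ x in Ico (dyadicNode j) (dyadicNode (j + 4)),
          ‖jacobi α β x * f x‖ₑ ^ (2 * r)) ^ (1 / 2 : ℝ) := by
  have hlocal := setLIntegral_jacobi_mul_symmDelta_Ico_le (α := α) (β := β) hf hr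
    (d := (1 / 2) ^ j) (by positivity) (pow_le_one₀ (by norm_num) (by norm_num)) hh
  have hnodes : dyadicNode (j + 1) = 1 - (1 / 2) ^ j ∧
      dyadicNode (j + 2) = 1 - (1 / 2) ^ j / 2 ∧ dyadicNode (j + 4) = 1 - (1 / 2) ^ j / 8 := by
    refine ⟨?_, ?_, ?_⟩ <;> rw [dyadicNode_add] <;> ring
  rwa [hnodes.1, hnodes.2.1, hnodes.2.2]

lemma sum_rpow_half_setLIntegral_dyadic_le (F : ℝ → ℝ≥0∞) (n : ℕ) :
    ∑ j ∈ Finset.range n,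
        (∫⁻ x in Ico (dyadicNode j) (dyadicNode (j + 4)), F x) ^ (1 / 2 : ℝ) ≤
      (n * (4 * ∫⁻ x in Icc (-1 : ℝ) 1, F x)) ^ (1 / 2 : ℝ) := by
  refine (sum_rpow_half_le _ _).trans ?_
  rw [Finset.card_range]
  gcongr
  exact sum_setLIntegral_Ico_add_le volume F dyadicNode_mono Ico_dyadicNode_subset 4 n

lemma setLIntegral_jacobi_mul_symmDelta_Icc_le (α β : ℝ) (hf : MonotoneOn f (Ioo (-1 : ℝ) 1))
    (hr : 1 ≤ r) (hh : 0 < h) (hh1 : h ≤ 1) :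
    ∫⁻ x in Icc 0 (1 - 2 * h ^ 2), ‖jacobi α β x * symmDelta 1 (h * phiW x) f x‖ₑ ^ r ≤
      ENNReal.ofReal (4 * localConst α β r * (h * √|Real.log h|)) *
        (∫⁻ x in Icc (-1 : ℝ) 1, ‖jacobi α β x * f x‖ₑ ^ (2 * r)) ^ (1 / 2 : ℝ) := by
  obtain ⟨n, hlt, hcard⟩ := exists_nat_half_pow_lt_two_mul_sq hh hh1
  have hC := localConst_pos α β r
  set G : ℝ → ℝ≥0∞ := fun x => ‖jacobi α β x * symmDelta 1 (h * phiW x) f x‖ₑ ^ r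
  set F : ℝ → ℝ≥0∞ := fun x => ‖jacobi α β x * f x‖ₑ ^ (2 * r)
  have hcover : Icc 0 (1 - 2 * h ^ 2) ⊆
      Ico (dyadicNode 1) (dyadicNode (n + 1)) ∩ Iic (1 - 2 * h ^ 2) := fun x hx =>
    ⟨⟨by norm_num [dyadicNode]; exact hx.1, by rw [dyadicNode_add]; linarith [hx.2]⟩, hx.2⟩
  have hpieces := setLIntegral_Ico_le_sum (fun j => dyadicNode (j + 1))
    (volume.restrict (Iic (1 - 2 * h ^ 2))) G n
  simp only [Measure.restrict_restrict measurableSet_Ico] at hpieces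
  have hconst : (n : ℝ≥0∞) * 4 ≤ ENNReal.ofReal (4 ^ 2 * |Real.log h|) := by
    rw [← ENNReal.ofReal_natCast, ← ENNReal.ofReal_ofNat 4, ← ENNReal.ofReal_mul (by positivity)]
    exact ENNReal.ofReal_le_ofReal (by linarith)
  calc ∫⁻ x in Icc 0 (1 - 2 * h ^ 2), G x
      ≤ ∑ j ∈ Finset.range n, ENNReal.ofReal (localConst α β r * h) *
          (∫⁻ x in Ico (dyadicNode j) (dyadicNode (j + 4)), F x) ^ (1 / 2 : ℝ) :=
        ((lintegral_mono_set hcover).trans hpieces).trans <| Finset.sum_le_sum fun j _ =>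
          setLIntegral_jacobi_mul_symmDelta_dyadic_le α β hf hr hh.le j
    _ ≤ ENNReal.ofReal (localConst α β r * h) *
          (ENNReal.ofReal (4 ^ 2 * |Real.log h|) * ∫⁻ x in Icc (-1 : ℝ) 1, F x) ^ (1 / 2 : ℝ) := by
        rw [← Finset.mul_sum]
        refine mul_le_mul_right ((sum_rpow_half_setLIntegral_dyadic_le F n).trans ?_) _
        rw [← mul_assoc]
        gcongr
    _ = _ := by
        rw [ENNReal.mul_rpow_of_nonneg _ _ (by norm_num), ← mul_assoc,
          ENNReal.ofReal_rpow_of_nonneg (by positivity) (by norm_num),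
          ← ENNReal.ofReal_mul (by positivity), ← Real.sqrt_eq_rpow,
          Real.sqrt_mul (by positivity), Real.sqrt_sq (by norm_num)]
        congr 2
        ring

end DyadicSum

/-! ### The upper bound -/

/-- The order `δ ^ (1 / r) |log δ| ^ (1 / (2 r))` of the supremum of the modulus, `r` being the
exponent `q` as a real number. -/
def modulusRate (r δ : ℝ) : ℝ := δ ^ (1 / r) * |Real.log δ| ^ (1 / (2 * r))

lemma modulusRate_nonneg (r : ℝ) {δ : ℝ} (hδ : 0 ≤ δ) : 0 ≤ modulusRate r δ := by
  unfold modulusRate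
  positivity

lemma rpow_mul_sqrt_abs_log_eq (r : ℝ) {C δ : ℝ} (hC : 0 ≤ C) (hδ : 0 ≤ δ) :
    (C * (δ * √|Real.log δ|)) ^ (1 / r) = C ^ (1 / r) * modulusRate r δ := by
  rw [Real.mul_rpow hC (by positivity), Real.mul_rpow hδ (by positivity), Real.sqrt_eq_rpow,
    ← Real.rpow_mul (abs_nonneg _), modulusRate]
  congr 3
  ring

lemma rpow_one_div_le_modulusRate {r δ : ℝ} (hr : 0 ≤ r) (hδ : 0 < δ) (hδ4 : δ < 1 / 4) :
    δ ^ (1 / r) ≤ modulusRate r δ :=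
  le_mul_of_one_le_right (by positivity)
    (Real.one_le_rpow (one_le_abs_log hδ hδ4) (by positivity))

lemma toReal_two_mul (q : ℝ≥0∞) : (2 * q).toReal = 2 * q.toReal := by simp

lemma LpOn_le_add (g : ℝ → ℝ) {p : ℝ≥0∞} (hp1 : 1 ≤ p) (hp : p ≠ ∞) (a b c : ℝ) :
    LpOn g p a c ≤ LpOn g p a b + LpOn g p b c := by
  have hp0 : p ≠ 0 := (zero_lt_one.trans_le hp1).ne'
  have hr : 1 ≤ p.toReal := by simpa using ENNReal.toReal_mono hp hp1
  simp only [LpOn_eq_lintegral g hp0 hp]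
  calc (∫⁻ x in Icc a c, ‖g x‖ₑ ^ p.toReal) ^ (1 / p.toReal)
      ≤ ((∫⁻ x in Icc a b, ‖g x‖ₑ ^ p.toReal) +
          ∫⁻ x in Icc b c, ‖g x‖ₑ ^ p.toReal) ^ (1 / p.toReal) := by
        gcongr
        exact (lintegral_mono_set Icc_subset_Icc_union_Icc).trans (lintegral_union_le _ _ _)
    _ ≤ _ := ENNReal.rpow_add_le_add_rpow _ _ (by positivity) (div_le_one_of_le₀ hr (by positivity))

section UpperBound

variable {q : ℝ≥0∞} {h δ : ℝ} {f : ℝ → ℝ} (α β : ℝ)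

lemma LpOn_jacobi_mul_symmDelta_right_le (hq1 : 1 ≤ q) (hq : q ≠ ∞)
    (hf : MonotoneOn f (Ioo (-1 : ℝ) 1)) (hh : 0 < h) (hhδ : h ≤ δ) (hδ4 : δ < 1 / 4) :
    LpOn (fun x => jacobi α β x * symmDelta 1 (h * phiW x) f x) q 0 (1 - 2 * h ^ 2) ≤
      ENNReal.ofReal ((4 * localConst α β q.toReal) ^ (1 / q.toReal) * modulusRate q.toReal δ) *
        LpOn (fun x => jacobi α β x * f x) (2 * q) (-1) 1 := by
  have hq0 : q ≠ 0 := (zero_lt_one.trans_le hq1).ne'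
  have hr : 1 ≤ q.toReal := by simpa using ENNReal.toReal_mono hq hq1
  have hC := localConst_pos α β q.toReal
  have hδ := hh.trans_le hhδ
  rw [← rpow_mul_sqrt_abs_log_eq _ (by positivity) hδ.le, LpOn_eq_lintegral _ hq0 hq,
    LpOn_eq_lintegral _ (mul_ne_zero two_ne_zero hq0) (ENNReal.mul_ne_top ENNReal.ofNat_ne_top hq),
    toReal_two_mul]
  set I := ∫⁻ x in Icc (-1 : ℝ) 1, ‖jacobi α β x * f x‖ₑ ^ (2 * q.toReal)
  have hint := setLIntegral_jacobi_mul_symmDelta_Icc_le α β hf hr hh (by linarith)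
  have hmono := mul_sqrt_abs_log_le_mul_sqrt_abs_log hh hhδ hδ4
  calc (∫⁻ x in Icc 0 (1 - 2 * h ^ 2),
          ‖jacobi α β x * symmDelta 1 (h * phiW x) f x‖ₑ ^ q.toReal) ^ (1 / q.toReal)
      ≤ (ENNReal.ofReal (4 * localConst α β q.toReal * (δ * √|Real.log δ|)) *
          I ^ (1 / 2 : ℝ)) ^ (1 / q.toReal) := by
        gcongr
        refine hint.trans ?_
        gcongr
    _ = _ := by
        rw [ENNReal.mul_rpow_of_nonneg _ _ (by positivity),
          ENNReal.ofReal_rpow_of_nonneg (by positivity) (by positivity), ← ENNReal.rpow_mul]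
        congr 2
        ring

lemma LpOn_jacobi_mul_symmDelta_left_le (hq1 : 1 ≤ q) (hq : q ≠ ∞)
    (hf : MonotoneOn f (Ioo (-1 : ℝ) 1)) (hh : 0 < h) (hhδ : h ≤ δ) (hδ4 : δ < 1 / 4) :
    LpOn (fun x => jacobi α β x * symmDelta 1 (h * phiW x) f x) q (-1 + 2 * h ^ 2) 0 ≤
      ENNReal.ofReal ((4 * localConst β α q.toReal) ^ (1 / q.toReal) * modulusRate q.toReal δ) *
        LpOn (fun x => jacobi α β x * f x) (2 * q) (-1) 1 := by
  have hright :=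
    LpOn_jacobi_mul_symmDelta_right_le β α hq1 hq (monotoneOn_reflect hf) hh hhδ hδ4
  have hdiff := LpOn_mul_symmDelta_reflect 1 (jacobi α β) (fun x => h * phiW x) id f q
    0 (1 - 2 * h ^ 2)
  have hnorm := LpOn_mul_reflect (jacobi α β) f (2 * q) (-1) 1
  simp only [jacobi_neg, phiW_neg, id, neg_neg, neg_zero, neg_sub', sub_neg_eq_add] at hdiff hnorm
  rwa [hdiff, hnorm] at hright

lemma OmegaMain_le (hq1 : 1 ≤ q) (hq : q ≠ ∞)
    (hf : MonotoneOn f (Ioo (-1 : ℝ) 1)) (hδ : 0 < δ) (hδ4 : δ < 1 / 4) :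
    OmegaMain 1 f δ (jacobi α β) q ≤
      ENNReal.ofReal (((4 * localConst β α q.toReal) ^ (1 / q.toReal) +
        (4 * localConst α β q.toReal) ^ (1 / q.toReal)) * modulusRate q.toReal δ) *
        LpOn (fun x => jacobi α β x * f x) (2 * q) (-1) 1 := by
  have hrate := modulusRate_nonneg q.toReal hδ.le
  have hC := localConst_pos α β q.toReal
  have hC' := localConst_pos β α q.toReal
  refine iSup₂_le fun h hh => ?_
  simp only [Nat.cast_one, one_pow, mul_one]
  refine (LpOn_le_add _ hq1 hq _ 0 _).trans ?_
  rw [add_mul, ENNReal.ofReal_add (by positivity) (by positivity), add_mul]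
  exact add_le_add (LpOn_jacobi_mul_symmDelta_left_le α β hq1 hq hf hh.1 hh.2 hδ4)
    (LpOn_jacobi_mul_symmDelta_right_le α β hq1 hq hf hh.1 hh.2 hδ4)

end UpperBound

section EndpointBound

lemma LpOn_mono_set (g : ℝ → ℝ) (p : ℝ≥0∞) {a b a' b' : ℝ} (ha : a' ≤ a) (hb : b ≤ b') :
    LpOn g p a b ≤ LpOn g p a' b' :=
  eLpNorm_mono_measure g (Measure.restrict_mono (Icc_subset_Icc ha hb) le_rfl)

lemma LpOn_mono_of_Ico {g G : ℝ → ℝ} (p : ℝ≥0∞) {a b : ℝ} (hgG : ∀ x ∈ Ico a b, |g x| ≤ G x) :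
    LpOn g p a b ≤ LpOn G p a b := by
  simp only [LpOn, ← restrict_Ico_eq_restrict_Icc]
  exact eLpNorm_mono_ae_real (ae_restrict_of_forall_mem measurableSet_Ico hgG)

lemma LpOn_abs_add_abs_le {g G : ℝ → ℝ} (hg : Measurable g) (hG : Measurable G) {p : ℝ≥0∞}
    (hp : 1 ≤ p) (a b : ℝ) : LpOn (fun x => |g x| + |G x|) p a b ≤ LpOn g p a b + LpOn G p a b :=
  (eLpNorm_add_le hg.abs.aestronglyMeasurable hG.abs.aestronglyMeasurable hp).trans_eq
    (congrArg₂ (· + ·) (eLpNorm_norm g) (eLpNorm_norm G))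

lemma LpOn_le_LpOn_two_mul_mul {g : ℝ → ℝ} (hg : Measurable g) {p : ℝ≥0∞} (hp : p ≠ 0)
    (hp' : p ≠ ∞) (a b : ℝ) :
    LpOn g p a b ≤ LpOn g (2 * p) a b * ENNReal.ofReal (b - a) ^ (1 / (2 * p.toReal)) := by
  have hHolder := eLpNorm_le_eLpNorm_mul_rpow_measure_univ (μ := volume.restrict (Icc a b))
    (le_mul_of_one_le_left (zero_le : 0 ≤ p) one_le_two) hg.aestronglyMeasurable
  rw [toReal_two_mul, Measure.restrict_apply_univ, Real.volume_Icc] at hHolder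
  have hr := (ENNReal.toReal_pos hp hp').ne'
  have hexp : 1 / p.toReal - 1 / (2 * p.toReal) = 1 / (2 * p.toReal) := by
    field_simp
    norm_num
  rwa [hexp] at hHolder

lemma LpOn_jacobi_one_sub_le {α β ε : ℝ} {p : ℝ≥0∞} (hp : p ≠ 0) (hp' : p ≠ ∞)
    (hβ : -1 < β * p.toReal) (hε : 0 < ε) (hε1 : ε ≤ 1) :
    LpOn (jacobi α β) p (1 - ε) 1 ≤ ENNReal.ofReal
      (8 ^ |α| * ((1 / (β * p.toReal + 1)) ^ (1 / p.toReal) * ε ^ (β + 1 / p.toReal))) := by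
  have hs := ENNReal.toReal_pos hp hp'
  have hβ1 : 0 < β * p.toReal + 1 := by linarith
  have hscale : (1 / (β * p.toReal + 1)) ^ (1 / p.toReal) * ε ^ (β + 1 / p.toReal) =
      (ε ^ (β * p.toReal + 1) / (β * p.toReal + 1)) ^ (1 / p.toReal) := by
    rw [div_eq_mul_one_div (ε ^ (β * p.toReal + 1)), Real.mul_rpow (by positivity) (by positivity),
      ← Real.rpow_mul hε.le, mul_comm]
    congr 2
    field_simp
  have hpow : LpOn (fun x => (1 - x) ^ β) p (1 - ε) 1 = ENNReal.ofReal
      ((1 / (β * p.toReal + 1)) ^ (1 / p.toReal) * ε ^ (β + 1 / p.toReal)) := by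
    rw [hscale, LpOn_eq_lintegral _ hp hp', ← restrict_Ico_eq_restrict_Icc,
      ← ENNReal.ofReal_rpow_of_nonneg (by positivity) (by positivity),
      ← setLIntegral_Ico_one_sub_rpow hβ hε.le]
    congr 1
    refine setLIntegral_congr_fun measurableSet_Ico fun x hx => ?_
    rw [enorm_rpow_eq_ofReal _ hs.le, abs_of_nonneg (Real.rpow_nonneg (by linarith [hx.2]) _),
      ← Real.rpow_mul (by linarith [hx.2])]
  rw [ENNReal.ofReal_mul (by positivity), ← hpow, ← Real.enorm_of_nonneg (by positivity),
    ← LpOn_const_mul]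
  refine LpOn_mono_of_Ico p fun x hx => ?_
  rw [abs_of_nonneg (jacobi_nonneg α β ⟨by linarith [hx.1], hx.2.le⟩)]
  exact jacobi_le_one_sub_rpow α β ⟨by linarith [hx.1], hx.2.le⟩

lemma ofReal_rpow_mul_abs_le_LpOn {α β d : ℝ} {f : ℝ → ℝ} {p : ℝ≥0∞} (hp : p ≠ 0) (hp' : p ≠ ∞)
    (hf : MonotoneOn f (Ioo (-1 : ℝ) 1)) (hd : 0 < d) (hd1 : d ≤ 1) :
    ENNReal.ofReal (d ^ β * |f (1 - d)| * d ^ (1 / p.toReal)) ≤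
      ENNReal.ofReal (8 ^ (1 / p.toReal) * jacobiRatio α β) *
        LpOn (fun x => jacobi α β x * f x) p (-1) 1 := by
  have hs := ENNReal.toReal_pos hp hp'
  have hK := jacobiRatio_pos α β
  have root_mul {a : ℝ} (b : ℝ) (ha : 0 ≤ a) (hb : 0 ≤ b) :
      (a ^ p.toReal * b) ^ (1 / p.toReal) = a * b ^ (1 / p.toReal) := by
    rw [Real.mul_rpow (by positivity) hb, one_div, Real.rpow_rpow_inv ha hs.ne']
  have hpoint := ENNReal.rpow_le_rpow ((ofReal_rpow_mul_le_setLIntegral_jacobi_mul (α := α) (β := β)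
    (c := 1 - d) hf hs.le hd hd1 ⟨by linarith, by linarith⟩).trans <| mul_le_mul_right
      (lintegral_mono_set (t := Icc (-1 : ℝ) 1) (Ico_subset_Icc_self.trans
        (Icc_subset_Icc (by linarith) (by linarith)))) _) (one_div_pos.2 hs).le
  rwa [ENNReal.mul_rpow_of_nonneg _ _ (by positivity),
    ENNReal.ofReal_rpow_of_nonneg (by positivity) (by positivity),
    ENNReal.ofReal_rpow_of_nonneg (by positivity) (by positivity), root_mul _ (by positivity) hd.le,
    mul_comm 8, root_mul _ hK.le (by norm_num), ← LpOn_eq_lintegral _ hp hp',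
    mul_comm (jacobiRatio α β)] at hpoint

/-- The constant in the comparison, near the endpoint `1`, of the `p`-norm of a constant multiple of
the weight with that of a weighted monotone function; here `s` stands for `p`. -/
def endpointConst (α β s : ℝ) : ℝ :=
  8 ^ |α| * (1 / (β * s + 1)) ^ (1 / s) * (8 ^ (1 / s) * jacobiRatio α β)

lemma endpointConst_nonneg {β s : ℝ} (α : ℝ) (hβ : -1 < β * s) : 0 ≤ endpointConst α β s := by
  have hK := jacobiRatio_pos α β
  have hβ1 : 0 < β * s + 1 := by linarith
  unfold endpointConst
  positivity

lemma LpOn_const_mul_jacobi_le {α β d : ℝ} {f : ℝ → ℝ} {p : ℝ≥0∞} (hp : p ≠ 0) (hp' : p ≠ ∞)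
    (hβ : -1 < β * p.toReal) (hf : MonotoneOn f (Ioo (-1 : ℝ) 1)) (hd : 0 < d) (hd1 : d ≤ 1) :
    LpOn (fun x => f (1 - d) * jacobi α β x) p (1 - d) 1 ≤
      ENNReal.ofReal (endpointConst α β p.toReal) *
        LpOn (fun x => jacobi α β x * f x) p (-1) 1 := by
  have hβ1 : 0 < β * p.toReal + 1 := by linarith
  calc LpOn (fun x => f (1 - d) * jacobi α β x) p (1 - d) 1
      ≤ ENNReal.ofReal |f (1 - d)| * ENNReal.ofReal
          (8 ^ |α| * ((1 / (β * p.toReal + 1)) ^ (1 / p.toReal) * d ^ (β + 1 / p.toReal))) := by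
        rw [LpOn_const_mul, Real.enorm_eq_ofReal_abs]
        gcongr
        exact LpOn_jacobi_one_sub_le hp hp' hβ hd hd1
    _ = ENNReal.ofReal (8 ^ |α| * (1 / (β * p.toReal + 1)) ^ (1 / p.toReal)) *
          ENNReal.ofReal (d ^ β * |f (1 - d)| * d ^ (1 / p.toReal)) := by
        rw [Real.rpow_add hd, ← ENNReal.ofReal_mul (abs_nonneg _),
          ← ENNReal.ofReal_mul (by positivity)]
        congr 1
        ring
    _ ≤ _ := by
        rw [endpointConst, ENNReal.ofReal_mul (q := 8 ^ (1 / p.toReal) * jacobiRatio α β)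
          (by positivity), mul_assoc (ENNReal.ofReal _)]
        exact mul_le_mul_right (ofReal_rpow_mul_abs_le_LpOn hp hp' hf hd hd1) _

variable {α β δ : ℝ} {f : ℝ → ℝ} {q : ℝ≥0∞}

lemma abs_jacobi_mul_symmDelta_backward_le {h x : ℝ} (hf : MonotoneOn f (Ioo (-1 : ℝ) 1))
    (hδ4 : δ < 1 / 4) (hδ : 0 < δ) (hh : h ∈ Ioc 0 (2 * δ ^ 2)) (hx : x ∈ Ico (1 - 2 * δ ^ 2) 1) :
    |jacobi α β x * symmDelta 1 h f (x - h / 2)| ≤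
      |jacobi α β x * f x| + |f (1 - 4 * δ ^ 2) * jacobi α β x| := by
  have hδ2 : δ ^ 2 ≤ 1 / 16 := by nlinarith
  obtain ⟨hh0, hhδ⟩ := hh
  obtain ⟨hxl, hxr⟩ := hx
  have hstart : f (1 - 4 * δ ^ 2) ≤ f (x - h) :=
    hf ⟨by linarith, by nlinarith⟩ ⟨by linarith, by linarith⟩ (by linarith)
  have hstep : f (x - h) ≤ f x :=
    hf ⟨by linarith, by linarith⟩ ⟨by linarith, hxr⟩ (by linarith)
  rw [symmDelta_one_of_mem f ⟨by linarith, by linarith⟩ ⟨by linarith, by linarith⟩,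
    sub_add_cancel, sub_sub, add_halves, mul_comm (f _), abs_mul, abs_mul, abs_mul, ← mul_add]
  refine mul_le_mul_of_nonneg_left ?_ (abs_nonneg _)
  rw [abs_of_nonneg (sub_nonneg.2 hstep)]
  linarith [le_abs_self (f x), neg_abs_le (f (1 - 4 * δ ^ 2))]

lemma LpOn_backward_majorant_le {d : ℝ} {p : ℝ≥0∞} (hp1 : 1 ≤ p) (hp : p ≠ ∞)
    (hβ : -1 < β * p.toReal) (hfm : Measurable f) (hf : MonotoneOn f (Ioo (-1 : ℝ) 1))
    (hd : 0 < d) (hd1 : d ≤ 1) :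
    LpOn (fun x => |jacobi α β x * f x| + |f (1 - d) * jacobi α β x|) p (1 - d) 1 ≤
      ENNReal.ofReal (1 + endpointConst α β p.toReal) *
        LpOn (fun x => jacobi α β x * f x) p (-1) 1 := by
  have hw := measurable_jacobi α β
  refine (LpOn_abs_add_abs_le (hw.mul hfm) (hw.const_mul _) hp1 _ _).trans ?_
  rw [ENNReal.ofReal_add zero_le_one (endpointConst_nonneg α hβ), ENNReal.ofReal_one, add_mul,
    one_mul]
  exact add_le_add (LpOn_mono_set _ p (by linarith) le_rfl)
    (LpOn_const_mul_jacobi_le (zero_lt_one.trans_le hp1).ne' hp hβ hf hd hd1)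

lemma rpow_two_mul_sq_le_modulusRate {r : ℝ} (hr : 1 ≤ r) (hδ : 0 < δ) (hδ4 : δ < 1 / 4) :
    (2 * δ ^ 2) ^ (1 / (2 * r)) ≤ 2 * modulusRate r δ := by
  have hsq : (δ ^ 2) ^ (1 / (2 * r)) = δ ^ (1 / r) := by
    rw [← Real.rpow_natCast, ← Real.rpow_mul hδ.le]
    congr 1
    push_cast
    field_simp
  rw [Real.mul_rpow (by norm_num) (by positivity), hsq]
  exact mul_le_mul
    (Real.rpow_le_self_of_one_le (by norm_num) (div_le_one_of_le₀ (by linarith) (by positivity)))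
    (rpow_one_div_le_modulusRate (by positivity) hδ hδ4) (by positivity) (by norm_num)

lemma OmegaBwd_le (α : ℝ) (hq1 : 1 ≤ q) (hq : q ≠ ∞) (hβ : -1 < β * (2 * q.toReal))
    (hfm : Measurable f) (hf : MonotoneOn f (Ioo (-1 : ℝ) 1)) (hδ : 0 < δ) (hδ4 : δ < 1 / 4) :
    OmegaBwd 1 f δ (jacobi α β) q ≤
      ENNReal.ofReal (2 * (1 + endpointConst α β (2 * q.toReal)) * modulusRate q.toReal δ) *
        LpOn (fun x => jacobi α β x * f x) (2 * q) (-1) 1 := by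
  have hr : 1 ≤ q.toReal := by simpa using ENNReal.toReal_mono hq hq1
  have hE := endpointConst_nonneg α hβ
  set majorant : ℝ → ℝ := fun x => |jacobi α β x * f x| + |f (1 - 4 * δ ^ 2) * jacobi α β x|
  have hw := measurable_jacobi α β
  have hmajorant : Measurable majorant := (hw.mul hfm).abs.add (hw.const_mul _).abs
  have hmajorant_le := (LpOn_mono_set majorant (2 * q) (a := 1 - 2 * δ ^ 2)
    (by nlinarith) le_rfl).trans <| LpOn_backward_majorant_le (one_le_mul one_le_two hq1)
      (ENNReal.mul_ne_top ENNReal.ofNat_ne_top hq) (by rwa [toReal_two_mul]) hfm hf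
      (by positivity) (by nlinarith)
  rw [toReal_two_mul] at hmajorant_le
  refine iSup₂_le fun h hh => ?_
  simp only [Nat.cast_one, one_pow, mul_one, one_mul] at hh ⊢
  calc LpOn (fun x => jacobi α β x * symmDelta 1 h f (x - h / 2)) q (1 - 2 * δ ^ 2) 1
      ≤ LpOn majorant q (1 - 2 * δ ^ 2) 1 :=
        LpOn_mono_of_Ico q fun x hx => abs_jacobi_mul_symmDelta_backward_le hf hδ4 hδ hh hx
    _ ≤ LpOn majorant (2 * q) (1 - 2 * δ ^ 2) 1 * ENNReal.ofReal (2 * modulusRate q.toReal δ) := by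
        refine (LpOn_le_LpOn_two_mul_mul hmajorant (zero_lt_one.trans_le hq1).ne' hq _ _).trans ?_
        rw [sub_sub_cancel, ENNReal.ofReal_rpow_of_nonneg (by positivity) (by positivity)]
        gcongr
        exact rpow_two_mul_sq_le_modulusRate hr hδ hδ4
    _ ≤ _ := by
        refine (mul_le_mul_left hmajorant_le _).trans_eq ?_
        rw [mul_right_comm, ← ENNReal.ofReal_mul (by positivity)]
        congr 2
        ring

lemma OmegaFwd_le (β : ℝ) (hq1 : 1 ≤ q) (hq : q ≠ ∞) (hα : -1 < α * (2 * q.toReal))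
    (hfm : Measurable f) (hf : MonotoneOn f (Ioo (-1 : ℝ) 1)) (hδ : 0 < δ) (hδ4 : δ < 1 / 4) :
    OmegaFwd 1 f δ (jacobi α β) q ≤
      ENNReal.ofReal (2 * (1 + endpointConst β α (2 * q.toReal)) * modulusRate q.toReal δ) *
        LpOn (fun x => jacobi α β x * f x) (2 * q) (-1) 1 := by
  have hbwd := OmegaBwd_le β hq1 hq hα (hfm.comp measurable_neg).neg (monotoneOn_reflect hf) hδ hδ4
  have hnorm := LpOn_mul_reflect (jacobi α β) f (2 * q) (-1) 1
  simp only [jacobi_neg, neg_neg] at hnorm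
  rw [OmegaFwd_eq_OmegaBwd_reflect]
  simp only [jacobi_neg]
  exact hnorm ▸ hbwd

end EndpointBound

lemma exists_omegaDT_le {q : ℝ≥0∞} {α β : ℝ} (hq1 : 1 ≤ q) (hq : q ≠ ∞)
    (hα : -1 < α * (2 * q.toReal)) (hβ : -1 < β * (2 * q.toReal)) :
    ∃ C > 0, ∀ δ : ℝ, 0 < δ → δ < 1 / 4 → ∀ f : ℝ → ℝ, Measurable f →
      MonotoneOn f (Ioo (-1 : ℝ) 1) → omegaDT 1 f δ (jacobi α β) q ≤
        ENNReal.ofReal (C * modulusRate q.toReal δ) *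
          LpOn (fun x => jacobi α β x * f x) (2 * q) (-1) 1 := by
  have hC := localConst_pos α β q.toReal
  have hC' := localConst_pos β α q.toReal
  have hE := endpointConst_nonneg β hα
  have hE' := endpointConst_nonneg α hβ
  refine ⟨(4 * localConst β α q.toReal) ^ (1 / q.toReal) +
    (4 * localConst α β q.toReal) ^ (1 / q.toReal) + 2 * (1 + endpointConst β α (2 * q.toReal)) +
    2 * (1 + endpointConst α β (2 * q.toReal)), by positivity, fun δ hδ hδ4 f hfm hf => ?_⟩
  have hrate := modulusRate_nonneg q.toReal hδ.le
  rw [add_mul _ (2 * (1 + endpointConst α β _)), add_mul _ (2 * (1 + endpointConst β α _)),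
    ENNReal.ofReal_add (by positivity) (by positivity),
    ENNReal.ofReal_add (by positivity) (by positivity), add_mul, add_mul]
  exact add_le_add_three (OmegaMain_le α β hq1 hq hf hδ hδ4)
    (OmegaFwd_le β hq1 hq hα hfm hf hδ hδ4) (OmegaBwd_le α hq1 hq hβ hfm hf hδ hδ4)

/-! ### The lower bound -/

lemma sum_pow_le_of_forall_pow_le {R y : ℝ} (hR : 1 < R) (hy : 0 ≤ y) (s : Finset ℕ)
    (hs : ∀ j ∈ s, R ^ j ≤ y) : ∑ j ∈ s, R ^ j ≤ R / (R - 1) * y := by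
  have : 0 < R - 1 := sub_pos.2 hR
  rcases s.eq_empty_or_nonempty with rfl | hne
  · rw [Finset.sum_empty]
    positivity
  have hsub : s ⊆ Finset.range (s.max' hne + 1) := fun j hj =>
    Finset.mem_range_succ_iff.2 (s.le_max' j hj)
  calc ∑ j ∈ s, R ^ j ≤ ∑ j ∈ Finset.range (s.max' hne + 1), R ^ j :=
        Finset.sum_le_sum_of_subset_of_nonneg hsub fun _ _ _ => by positivity
    _ = (R ^ s.max' hne * R - 1) / (R - 1) := by rw [geom_sum_eq hR.ne', pow_succ]
    _ ≤ y * R / (R - 1) := by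
        gcongr
        linarith [mul_le_mul_of_nonneg_right (hs _ (s.max'_mem hne)) (by linarith : 0 ≤ R)]
    _ = R / (R - 1) * y := by ring

/-- The extremal step function: it vanishes to the left of `0` and jumps by `R ^ j` at
`1 - (1 / 2) ^ j` for every `j < n`. -/
def dyadicStep (R : ℝ) (n : ℕ) (x : ℝ) : ℝ :=
  ∑ j ∈ Finset.range n with dyadicNode (j + 1) ≤ x, R ^ j

section DyadicStep

variable {R x y : ℝ} {n : ℕ}

lemma dyadicStep_nonneg (hR : 0 ≤ R) (n : ℕ) (x : ℝ) : 0 ≤ dyadicStep R n x :=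
  Finset.sum_nonneg fun _ _ => by positivity

lemma dyadicStep_mono (hR : 0 ≤ R) (n : ℕ) : Monotone (dyadicStep R n) := fun _ _ hxy =>
  Finset.sum_le_sum_of_subset_of_nonneg
    (Finset.monotone_filter_right _ fun _ _ hj => hj.trans hxy) fun _ _ _ => by positivity

lemma dyadicStep_eq_zero (hx : x < 0) : dyadicStep R n x = 0 := by
  refine Finset.sum_eq_zero fun j hj => absurd (Finset.mem_filter.1 hj).2 (not_le.2 ?_)
  have hnode := dyadicNode_mono (Nat.le_add_left 1 j)
  norm_num [dyadicNode] at hnode ⊢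
  linarith

lemma pow_le_dyadicStep_sub {j : ℕ} (hR : 0 ≤ R) (hj : j < n) (hx : x < dyadicNode (j + 1))
    (hy : dyadicNode (j + 1) ≤ y) : R ^ j ≤ dyadicStep R n y - dyadicStep R n x := by
  have hnot : j ∉ Finset.filter (fun i => dyadicNode (i + 1) ≤ x) (Finset.range n) := by
    simp [hx]
  rw [le_sub_iff_add_le, dyadicStep, ← Finset.sum_insert hnot]
  refine Finset.sum_le_sum_of_subset_of_nonneg (Finset.insert_subset (by simp [hj, hy])
    (Finset.monotone_filter_right _ fun _ _ hi => ?_)) fun _ _ _ => by positivity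
  exact hi.trans (hx.le.trans hy)

lemma dyadicStep_le_of_forall_pow_le (hR : 1 < R) (hy : 0 ≤ y)
    (h : ∀ j < n, dyadicNode (j + 1) ≤ x → R ^ j ≤ y) : dyadicStep R n x ≤ R / (R - 1) * y :=
  sum_pow_le_of_forall_pow_le hR hy _ fun j hj =>
    h j (Finset.mem_range.1 (Finset.mem_filter.1 hj).1) (Finset.mem_filter.1 hj).2

lemma two_rpow_pow_eq (γ : ℝ) (j : ℕ) : ((2 : ℝ) ^ γ) ^ j = ((1 / 2 : ℝ) ^ j) ^ (-γ) := by
  rw [Real.rpow_neg (by positivity), ← Real.inv_rpow (by positivity), ← inv_pow, one_div, inv_inv,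
    Real.rpow_pow_comm zero_le_two]

lemma dyadicStep_le_one_sub_rpow {γ : ℝ} (hγ : 0 < γ) (n : ℕ) (hx : x < 1) :
    dyadicStep (2 ^ γ) n x ≤ 2 ^ γ / (2 ^ γ - 1) * (1 - x) ^ (-γ) := by
  have hx0 : 0 < 1 - x := sub_pos.2 hx
  refine dyadicStep_le_of_forall_pow_le (Real.one_lt_rpow one_lt_two hγ) (by positivity)
    fun j _ hj => ?_
  rw [dyadicNode_add] at hj
  rw [two_rpow_pow_eq]
  exact Real.rpow_le_rpow_of_nonpos hx0 (by linarith) (neg_nonpos.2 hγ.le)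

lemma dyadicStep_le_half_pow_rpow {γ : ℝ} (hγ : 0 < γ) (n : ℕ) (x : ℝ) :
    dyadicStep (2 ^ γ) n x ≤ 2 ^ γ / (2 ^ γ - 1) * ((1 / 2) ^ n) ^ (-γ) := by
  rw [← two_rpow_pow_eq]
  have hR : (1 : ℝ) < 2 ^ γ := Real.one_lt_rpow one_lt_two hγ
  exact dyadicStep_le_of_forall_pow_le hR (by positivity) fun j hj _ =>
    pow_le_pow_right₀ hR.le hj.le

end DyadicStep

section CriticalPower

variable {α β M ε : ℝ} {g : ℝ → ℝ} {p : ℝ≥0∞}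

lemma LpOn_jacobi_mul_head_le (hp : p ≠ 0) (hp' : p ≠ ∞) (hM : 0 ≤ M) (hε : 0 < ε) (hε1 : ε ≤ 1)
    (hg : ∀ x ∈ Ico 0 (1 - ε), |g x| ≤ M * (1 - x) ^ (-(β + 1 / p.toReal))) :
    LpOn (fun x => jacobi α β x * g x) p 0 (1 - ε) ≤
      ENNReal.ofReal (M * 8 ^ |α| * (-Real.log ε) ^ (1 / p.toReal)) := by
  have hs := ENNReal.toReal_pos hp hp'
  have hlog : 0 ≤ -Real.log ε := neg_nonneg.2 (Real.log_nonpos hε.le hε1)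
  have hcritical : LpOn (fun x => (1 - x) ^ (-(1 / p.toReal))) p 0 (1 - ε) =
      ENNReal.ofReal ((-Real.log ε) ^ (1 / p.toReal)) := by
    rw [LpOn_eq_lintegral _ hp hp', ← restrict_Ico_eq_restrict_Icc,
      ← ENNReal.ofReal_rpow_of_nonneg hlog (by positivity), ← setLIntegral_Ico_one_sub_inv hε hε1]
    congr 1
    refine setLIntegral_congr_fun measurableSet_Ico fun x hx => ?_
    have hx0 : 0 ≤ 1 - x := by linarith [hx.2]
    rw [enorm_rpow_eq_ofReal _ hs.le, abs_of_nonneg (by positivity), ← Real.rpow_mul hx0, neg_mul,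
      one_div_mul_cancel hs.ne', Real.rpow_neg_one]
  rw [ENNReal.ofReal_mul (by positivity), ← hcritical, ← Real.enorm_of_nonneg (by positivity),
    ← LpOn_const_mul]
  refine LpOn_mono_of_Ico p fun x hx => ?_
  have hx0 : 0 < 1 - x := by linarith [hx.2]
  have hw := jacobi_le_one_sub_rpow α β (x := x) ⟨by linarith [hx.1], by linarith⟩
  rw [abs_mul, abs_of_nonneg (jacobi_nonneg α β ⟨by linarith [hx.1], by linarith⟩)]
  calc jacobi α β x * |g x| ≤ 8 ^ |α| * (1 - x) ^ β * (M * (1 - x) ^ (-(β + 1 / p.toReal))) :=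
        mul_le_mul hw (hg x hx) (abs_nonneg _) (by positivity)
    _ = M * 8 ^ |α| * ((1 - x) ^ β * (1 - x) ^ (-(β + 1 / p.toReal))) := by ring
    _ = M * 8 ^ |α| * (1 - x) ^ (-(1 / p.toReal)) := by rw [← Real.rpow_add hx0]; ring_nf

lemma LpOn_jacobi_mul_tail_le (hp : p ≠ 0) (hp' : p ≠ ∞) (hβ : -1 < β * p.toReal) (hM : 0 ≤ M)
    (hε : 0 < ε) (hε1 : ε ≤ 1)
    (hg : ∀ x ∈ Ico (1 - ε) 1, |g x| ≤ M * ε ^ (-(β + 1 / p.toReal))) :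
    LpOn (fun x => jacobi α β x * g x) p (1 - ε) 1 ≤
      ENNReal.ofReal (M * 8 ^ |α| * (1 / (β * p.toReal + 1)) ^ (1 / p.toReal)) := by
  have hs := ENNReal.toReal_pos hp hp'
  have hβ1 : 0 < β * p.toReal + 1 := by linarith
  calc LpOn (fun x => jacobi α β x * g x) p (1 - ε) 1
      ≤ LpOn (fun x => M * ε ^ (-(β + 1 / p.toReal)) * jacobi α β x) p (1 - ε) 1 := by
        refine LpOn_mono_of_Ico p fun x hx => ?_
        have hw := jacobi_nonneg α β (x := x) ⟨by linarith [hx.1], hx.2.le⟩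
        rw [abs_mul, abs_of_nonneg hw, mul_comm]
        exact mul_le_mul_of_nonneg_right (hg x hx) hw
    _ ≤ ENNReal.ofReal (M * ε ^ (-(β + 1 / p.toReal))) * ENNReal.ofReal
          (8 ^ |α| * ((1 / (β * p.toReal + 1)) ^ (1 / p.toReal) * ε ^ (β + 1 / p.toReal))) := by
        rw [LpOn_const_mul, Real.enorm_of_nonneg (by positivity)]
        gcongr
        exact LpOn_jacobi_one_sub_le hp hp' hβ hε hε1
    _ = _ := by
        rw [← ENNReal.ofReal_mul (by positivity), Real.rpow_neg hε.le]
        congr 1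
        field_simp

end CriticalPower

lemma add_one_div_pos {β s : ℝ} (hs : 0 < s) (hβ : -1 < β * s) : 0 < β + 1 / s := by
  rw [← neg_lt_iff_pos_add, ← neg_div, div_lt_iff₀ hs]
  exact hβ

lemma neg_log_half_pow_le (n : ℕ) : -Real.log ((1 / 2 : ℝ) ^ n) ≤ n := by
  rw [Real.log_pow, one_div, Real.log_inv]
  nlinarith [Real.log_two_lt_d9, n.cast_nonneg (α := ℝ)]

lemma LpOn_mul_dyadicStep_eq_zero (w : ℝ → ℝ) (R : ℝ) (n : ℕ) (p : ℝ≥0∞) :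
    LpOn (fun x => w x * dyadicStep R n x) p (-1) 0 = 0 := by
  refine le_bot_iff.1
    ((LpOn_mono_of_Ico p (G := fun _ => 0) fun x hx => ?_).trans_eq eLpNorm_zero)
  rw [dyadicStep_eq_zero hx.2, mul_zero, abs_zero]

lemma exists_LpOn_jacobi_mul_dyadicStep_le (α : ℝ) {β : ℝ} {p : ℝ≥0∞} (hp1 : 1 ≤ p) (hp : p ≠ ∞)
    (hβ : -1 < β * p.toReal) : ∃ C > 0, ∀ n : ℕ, 1 ≤ n →
      LpOn (fun x => jacobi α β x * dyadicStep (2 ^ (β + 1 / p.toReal)) n x) p (-1) 1 ≤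
        ENNReal.ofReal (C * n ^ (1 / p.toReal)) := by
  have hp0 : p ≠ 0 := (zero_lt_one.trans_le hp1).ne'
  have hs := ENNReal.toReal_pos hp0 hp
  have hβ1 : 0 < β * p.toReal + 1 := by linarith
  have hγ := add_one_div_pos hs hβ
  set γ := β + 1 / p.toReal
  have hR : (1 : ℝ) < 2 ^ γ := Real.one_lt_rpow one_lt_two hγ
  have : (0 : ℝ) < 2 ^ γ - 1 := sub_pos.2 hR
  set M : ℝ := 2 ^ γ / (2 ^ γ - 1)
  refine ⟨M * 8 ^ |α| * (1 + (1 / (β * p.toReal + 1)) ^ (1 / p.toReal)), by positivity,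
    fun n hn => ?_⟩
  have habs (x : ℝ) : |dyadicStep (2 ^ γ) n x| = dyadicStep (2 ^ γ) n x :=
    abs_of_nonneg (dyadicStep_nonneg (by positivity) n x)
  have hn1 : (1 : ℝ) ≤ n ^ (1 / p.toReal) :=
    Real.one_le_rpow (by exact_mod_cast hn) (by positivity)
  have hε1 : ((1 : ℝ) / 2) ^ n ≤ 1 := pow_le_one₀ (by norm_num) (by norm_num)
  have hhead := LpOn_jacobi_mul_head_le (α := α) (M := M) hp0 hp (by positivity) (by positivity)
    hε1 fun x hx => (habs x).trans_le (dyadicStep_le_one_sub_rpow hγ n (x := x)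
      (hx.2.trans_le (by linarith [show (0 : ℝ) < (1 / 2) ^ n by positivity])))
  have htail := LpOn_jacobi_mul_tail_le (α := α) (M := M) hp0 hp hβ (by positivity) (by positivity)
    hε1 fun x _ => (habs x).trans_le (dyadicStep_le_half_pow_rpow hγ n x)
  calc LpOn (fun x => jacobi α β x * dyadicStep (2 ^ γ) n x) p (-1) 1
      ≤ 0 + (_ + _) := (LpOn_le_add _ hp1 hp _ 0 _).trans
        (add_le_add (LpOn_mul_dyadicStep_eq_zero _ _ _ _).le
          ((LpOn_le_add _ hp1 hp _ _ _).trans (add_le_add hhead htail)))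
    _ ≤ _ := by
        have hlog : 0 ≤ -Real.log ((1 / 2 : ℝ) ^ n) :=
          neg_nonneg.2 (Real.log_nonpos (by positivity) hε1)
        rw [zero_add, ← ENNReal.ofReal_add (by positivity) (by positivity)]
        refine ENNReal.ofReal_le_ofReal ?_
        rw [← mul_add, mul_assoc (M * 8 ^ |α|), add_mul, one_mul]
        gcongr
        · exact neg_log_half_pow_le n
        · exact le_mul_of_one_le_right (by positivity) hn1

/-- A window of points to the left of `1 - d` from which the step `δ * phiW x / 2` reaches
`1 - d`; see `le_add_mul_phiW_of_mem_jumpWindow`. -/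
def jumpWindow (δ d : ℝ) : Set ℝ := Ico (1 - d - δ * √d / 4) (1 - d)

section JumpWindow

variable {δ d x : ℝ}

lemma jumpWindow_subset_Ico (hδ : 0 ≤ δ) (hd1 : d ≤ 1) :
    jumpWindow δ d ⊆ Ico (1 - d - δ / 4) (1 - d) := by
  have hsqrt : √d ≤ 1 := Real.sqrt_le_one.2 hd1
  exact Ico_subset_Ico_left (by linarith [mul_le_of_le_one_right hδ hsqrt])

lemma jumpWindow_subset_Icc (hδ : 0 ≤ δ) (hδ4 : δ < 1 / 4) (hδd : δ ≤ d) (hd1 : d ≤ 1) :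
    jumpWindow δ d ⊆ Icc (-1 + 2 * δ ^ 2) (1 - 2 * δ ^ 2) := fun x hx => by
  obtain ⟨hx1, hx2⟩ := jumpWindow_subset_Ico hδ hd1 hx
  exact ⟨by nlinarith, by nlinarith⟩

lemma le_add_mul_phiW_of_mem_jumpWindow (hδ : 0 ≤ δ) (hδ4 : δ < 1 / 4) (hδd : δ ≤ d) (hd1 : d ≤ 1)
    (hx : x ∈ jumpWindow δ d) : 1 - d ≤ x + δ * phiW x / 2 := by
  obtain ⟨hx1, hx2⟩ := jumpWindow_subset_Ico hδ hd1 hx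
  have hphi : √d / 2 ≤ phiW x := sqrt_div_two_le_phiW ⟨by linarith, by linarith⟩ (by linarith)
  linarith [hx.1, mul_le_mul_of_nonneg_left hphi hδ]

lemma rpow_mul_jump_le_jacobi_mul_symmDelta (α β : ℝ) {f : ℝ → ℝ} {J : ℝ} (hδ : 0 < δ)
    (hδ4 : δ < 1 / 4) (hδd : δ ≤ d) (hd1 : d ≤ 1) (hJ : 0 ≤ J)
    (hjump : ∀ x y, x < 1 - d → 1 - d ≤ y → J ≤ f y - f x) (hx : x ∈ jumpWindow δ d) :
    d ^ β * J ≤ jacobiRatio α β * |jacobi α β x * symmDelta 1 (δ * phiW x) f x| := by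
  have hT := jumpWindow_subset_Icc hδ.le hδ4 hδd hd1 hx
  obtain ⟨hx1, hx2⟩ := jumpWindow_subset_Ico hδ.le hd1 hx
  have hstep : 0 ≤ δ * phiW x := mul_nonneg hδ.le (phiW_nonneg x)
  have hstep1 := mul_phiW_le_one_sub_abs (h := δ) (x := x) (abs_le.2 ⟨by linarith [hT.1], hT.2⟩)
  have hmem : x - δ * phiW x / 2 ∈ Icc (-1 : ℝ) 1 ∧ x + δ * phiW x / 2 ∈ Icc (-1 : ℝ) 1 := by
    refine ⟨⟨?_, ?_⟩, ?_, ?_⟩ <;> linarith [le_abs_self x, neg_abs_le x]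
  have hdelta : J ≤ symmDelta 1 (δ * phiW x) f x := by
    rw [symmDelta_one_of_mem f hmem.1 hmem.2]
    exact hjump _ _ (by linarith) (le_add_mul_phiW_of_mem_jumpWindow hδ.le hδ4 hδd hd1 hx)
  have hw : d ^ β ≤ jacobiRatio α β * jacobi α β x :=
    rpow_le_jacobiRatio_mul α β (by linarith) ⟨by linarith, by linarith⟩ (by linarith)
      (by linarith)
  rw [abs_mul, ← mul_assoc, abs_of_nonneg (hJ.trans hdelta),
    abs_of_nonneg (jacobi_nonneg α β ⟨by linarith, by linarith⟩)]
  exact mul_le_mul hw hdelta hJ ((Real.rpow_nonneg (by linarith) _).trans hw)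

lemma ofReal_le_setLIntegral_jumpWindow (α β : ℝ) {f : ℝ → ℝ} {J r : ℝ} (hr : 0 ≤ r) (hδ : 0 < δ)
    (hδ4 : δ < 1 / 4) (hδd : δ ≤ d) (hd1 : d ≤ 1) (hJ : 0 ≤ J)
    (hjump : ∀ x y, x < 1 - d → 1 - d ≤ y → J ≤ f y - f x) :
    ENNReal.ofReal ((d ^ β * J / jacobiRatio α β) ^ r * (δ * √d / 4)) ≤
      ∫⁻ x in jumpWindow δ d, ‖jacobi α β x * symmDelta 1 (δ * phiW x) f x‖ₑ ^ r := by
  have hK := jacobiRatio_pos α β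
  have hd : 0 < d := hδ.trans_le hδd
  rw [show δ * √d / 4 = 1 - d - (1 - d - δ * √d / 4) by ring]
  refine ofReal_mul_sub_le_setLIntegral (by positivity) (fun x hx => ?_) subset_rfl
  rw [enorm_rpow_eq_ofReal _ hr]
  gcongr
  rw [div_le_iff₀' hK]
  exact rpow_mul_jump_le_jacobi_mul_symmDelta α β hδ hδ4 hδd hd1 hJ hjump hx

end JumpWindow

section DyadicStepModulus

variable {β r δ : ℝ} {n : ℕ}

-- The exponent `β + 1 / (2 * r)` makes the contribution of a jump independent of its position.
lemma ofReal_le_setLIntegral_dyadicStep_jump (α : ℝ) (hr : 0 < r) (hδ : 0 < δ) (hδ4 : δ < 1 / 4)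
    {j : ℕ} (hj : j < n) (hδj : δ ≤ (1 / 2) ^ j) :
    ENNReal.ofReal ((1 / jacobiRatio α β) ^ r / 4 * δ) ≤
      ∫⁻ x in jumpWindow δ ((1 / 2) ^ j), ‖jacobi α β x *
        symmDelta 1 (δ * phiW x) (dyadicStep (2 ^ (β + 1 / (2 * r))) n) x‖ₑ ^ r := by
  have hK := jacobiRatio_pos α β
  have hnode : dyadicNode (j + 1) = 1 - (1 / 2) ^ j := by rw [dyadicNode_add]; ring
  refine le_trans (le_of_eq ?_) (ofReal_le_setLIntegral_jumpWindow α β (d := (1 / 2) ^ j)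
    (J := (2 ^ (β + 1 / (2 * r))) ^ j) hr.le hδ hδ4 hδj (pow_le_one₀ (by norm_num) (by norm_num))
    (by positivity) fun x y hx hy =>
      pow_le_dyadicStep_sub (by positivity) hj (hx.trans_eq hnode.symm) (hnode.trans_le hy))
  rw [two_rpow_pow_eq]
  set d : ℝ := (1 / 2) ^ j
  have hd : 0 < d := by positivity
  have hcancel : (d ^ β * d ^ (-(β + 1 / (2 * r)))) ^ r * √d = 1 := by
    rw [← Real.rpow_add hd, ← Real.rpow_mul hd.le, Real.sqrt_eq_rpow, ← Real.rpow_add hd,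
      ← Real.rpow_zero d]
    congr 1
    field_simp
    ring
  rw [div_eq_mul_one_div (d ^ β * _), Real.mul_rpow (by positivity) (by positivity)]
  congr 1
  linear_combination (-(1 / jacobiRatio α β) ^ r * δ / 4) * hcancel

lemma ofReal_le_setLIntegral_dyadicStep (α : ℝ) (hr : 0 < r) (hδ : 0 < δ) (hδ4 : δ < 1 / 4)
    (hn : ∀ j < n, δ ≤ (1 / 2) ^ j) :
    ENNReal.ofReal ((1 / jacobiRatio α β) ^ r / 4 * (δ * n)) ≤
      ∫⁻ x in Icc (-1 + 2 * δ ^ 2) (1 - 2 * δ ^ 2), ‖jacobi α β x *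
        symmDelta 1 (δ * phiW x) (dyadicStep (2 ^ (β + 1 / (2 * r))) n) x‖ₑ ^ r := by
  have hd1 (j : ℕ) : (1 / 2 : ℝ) ^ j ≤ 1 := pow_le_one₀ (by norm_num) (by norm_num)
  have hpieces := sum_setLIntegral_le_of_subset_Ico volume
    (fun x => ‖jacobi α β x *
      symmDelta 1 (δ * phiW x) (dyadicStep (2 ^ (β + 1 / (2 * r))) n) x‖ₑ ^ r)
    dyadicNode_mono (n := n) (E := fun j => jumpWindow δ ((1 / 2) ^ j)) (fun _ => measurableSet_Ico)
    (fun j hj => (jumpWindow_subset_Ico hδ.le (hd1 j)).trans (Ico_subset_Ico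
      (by rw [dyadicNode]; linarith [hn j hj]) (by rw [dyadicNode_add]; linarith)))
    fun j hj => jumpWindow_subset_Icc hδ.le hδ4 (hn j hj) (hd1 j)
  refine le_trans (le_trans (le_of_eq ?_) (Finset.card_nsmul_le_sum _ _ _ fun j hj =>
    ofReal_le_setLIntegral_dyadicStep_jump α hr hδ hδ4 (Finset.mem_range.1 hj)
      (hn j (Finset.mem_range.1 hj)))) hpieces
  rw [Finset.card_range, nsmul_eq_mul, ← ENNReal.ofReal_natCast,
    ← ENNReal.ofReal_mul (by positivity)]
  congr 1
  ring

lemma LpOn_le_omegaDT (k : ℕ) (f : ℝ → ℝ) (wt : ℝ → ℝ) (p : ℝ≥0∞) (hδ : 0 < δ) :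
    LpOn (fun x => wt x * symmDelta k (δ * phiW x) f x) p
      (-1 + 2 * (k : ℝ) ^ 2 * δ ^ 2) (1 - 2 * (k : ℝ) ^ 2 * δ ^ 2) ≤ omegaDT k f δ wt p :=
  le_add_right (le_add_right (le_iSup₂_of_le δ ⟨hδ, le_rfl⟩ le_rfl))

lemma ofReal_le_omegaDT_dyadicStep (α : ℝ) {q : ℝ≥0∞} (hq0 : q ≠ 0) (hq : q ≠ ∞) (hδ : 0 < δ)
    (hδ4 : δ < 1 / 4) (hn : ∀ j < n, δ ≤ (1 / 2) ^ j) :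
    ENNReal.ofReal (((1 / jacobiRatio α β) ^ q.toReal / 4 * (δ * n)) ^ (1 / q.toReal)) ≤
      omegaDT 1 (dyadicStep (2 ^ (β + 1 / (2 * q.toReal))) n) δ (jacobi α β) q := by
  have hK := jacobiRatio_pos α β
  have hr := ENNReal.toReal_pos hq0 hq
  refine le_trans ?_ (LpOn_le_omegaDT 1 _ _ _ hδ)
  rw [LpOn_eq_lintegral _ hq0 hq, ← ENNReal.ofReal_rpow_of_nonneg (by positivity) (by positivity),
    Nat.cast_one, one_pow, mul_one]
  gcongr
  exact ofReal_le_setLIntegral_dyadicStep α hr hδ hδ4 hn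

end DyadicStepModulus

lemma LpOn_jacobi_mul_dyadicStep_ne_zero (α β : ℝ) {R : ℝ} {n : ℕ} {p : ℝ≥0∞} (hR : 0 ≤ R)
    (hn : 0 < n) (hp : p ≠ 0) (hp' : p ≠ ∞) :
    LpOn (fun x => jacobi α β x * dyadicStep R n x) p (-1) 1 ≠ 0 := fun hzero => by
  have hjump : 1 ≤ dyadicStep R n 0 := by
    simpa [dyadicStep_eq_zero] using
      pow_le_dyadicStep_sub (x := -1) (y := 0) hR hn (by norm_num [dyadicNode])
        (by norm_num [dyadicNode])
  have hle := ofReal_rpow_mul_abs_le_LpOn (α := α) (β := β) (d := 1) hp hp'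
    ((dyadicStep_mono hR n).monotoneOn _) one_pos le_rfl
  rw [hzero, mul_zero, sub_self, Real.one_rpow, Real.one_rpow, one_mul, mul_one,
    nonpos_iff_eq_zero, ENNReal.ofReal_eq_zero] at hle
  linarith [le_abs_self (dyadicStep R n 0)]

lemma exists_nat_abs_log_le {δ : ℝ} (hδ : 0 < δ) (hδ1 : δ ≤ 1) :
    ∃ n : ℕ, 1 ≤ n ∧ |Real.log δ| ≤ n ∧ ∀ j < n, δ ≤ (1 / 2) ^ j := by
  obtain ⟨m, hlt, hle⟩ := exists_nat_pow_near_of_lt_one (y := (1 / 2 : ℝ)) hδ hδ1 (by norm_num)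
    (by norm_num)
  refine ⟨m + 1, Nat.le_add_left 1 m, ?_, fun j hj =>
    hle.trans (pow_le_pow_of_le_one (by norm_num) (by norm_num) (Nat.le_of_lt_succ hj))⟩
  rw [abs_of_nonpos (Real.log_nonpos hδ.le hδ1)]
  exact (neg_le_neg (Real.log_le_log (by positivity) hlt.le)).trans (neg_log_half_pow_le (m + 1))

lemma modulusRate_mul_rpow_le {r δ y : ℝ} (hr : 0 ≤ r) (hδ : 0 ≤ δ) (hy : |Real.log δ| ≤ y) :
    modulusRate r δ * y ^ (1 / (2 * r)) ≤ (δ * y) ^ (1 / r) := by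
  have hy0 : 0 ≤ y := (abs_nonneg _).trans hy
  calc modulusRate r δ * y ^ (1 / (2 * r))
      ≤ δ ^ (1 / r) * y ^ (1 / (2 * r)) * y ^ (1 / (2 * r)) := by
        unfold modulusRate
        gcongr
    _ = (δ * y) ^ (1 / r) := by
        rw [mul_assoc, ← Real.rpow_add_of_nonneg hy0 (by positivity) (by positivity),
          Real.mul_rpow hδ hy0]
        congr 2
        ring

lemma exists_le_iSup_omegaDT {q : ℝ≥0∞} (α : ℝ) {β : ℝ} (hq1 : 1 ≤ q) (hq : q ≠ ∞)
    (hβ : -1 < β * (2 * q.toReal)) :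
    ∃ c > 0, ∀ δ : ℝ, 0 < δ → δ < 1 / 4 → ENNReal.ofReal (c * modulusRate q.toReal δ) ≤
      ⨆ f ∈ BSet (2 * q) α β ∩ MSet 1, omegaDT 1 f δ (jacobi α β) q := by
  have hq0 : q ≠ 0 := (zero_lt_one.trans_le hq1).ne'
  have h2q0 : 2 * q ≠ 0 := mul_ne_zero two_ne_zero hq0
  have h2q : 2 * q ≠ ∞ := ENNReal.mul_ne_top ENNReal.ofNat_ne_top hq
  have hK := jacobiRatio_pos α β
  rw [← toReal_two_mul] at hβ
  obtain ⟨C, hC, hnorm⟩ := exists_LpOn_jacobi_mul_dyadicStep_le α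
    (hq1.trans (le_mul_of_one_le_left' one_le_two)) h2q hβ
  rw [toReal_two_mul] at hnorm
  set a : ℝ := (1 / jacobiRatio α β) ^ q.toReal / 4
  refine ⟨a ^ (1 / q.toReal) / C, by positivity, fun δ hδ hδ4 => ?_⟩
  obtain ⟨n, hn, hlog, hsmall⟩ := exists_nat_abs_log_le hδ (by linarith)
  have hmono := dyadicStep_mono (R := 2 ^ (β + 1 / (2 * q.toReal))) (by positivity) n
  have hlower := ofReal_le_omegaDT_dyadicStep α (β := β) hq0 hq hδ hδ4 hsmall
  set f := dyadicStep (2 ^ (β + 1 / (2 * q.toReal))) n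
  have : (0 : ℝ) < n := Nat.cast_pos.2 hn
  calc ENNReal.ofReal (a ^ (1 / q.toReal) / C * modulusRate q.toReal δ)
      ≤ ENNReal.ofReal ((a * (δ * n)) ^ (1 / q.toReal) / (C * n ^ (1 / (2 * q.toReal)))) := by
        refine ENNReal.ofReal_le_ofReal ?_
        rw [le_div_iff₀ (by positivity), Real.mul_rpow (by positivity) (by positivity)]
        refine le_of_eq_of_le ?_ (mul_le_mul_of_nonneg_left
          (modulusRate_mul_rpow_le ENNReal.toReal_nonneg hδ.le hlog) (by positivity))
        field_simp
    _ ≤ omegaDT 1 f δ (jacobi α β) q / LpOn (fun x => jacobi α β x * f x) (2 * q) (-1) 1 := by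
        rw [ENNReal.ofReal_div_of_pos (by positivity)]
        exact ENNReal.div_le_div hlower (hnorm n hn)
    _ ≤ _ := omegaDT_div_LpOn_le_iSup hmono.measurable
        (kMonotoneOn_one_iff.2 (hmono.monotoneOn _))
        (LpOn_jacobi_mul_dyadicStep_ne_zero α β (by positivity) hn h2q0 h2q)
        (ne_top_of_le_ne_top ENNReal.ofReal_ne_top (hnorm n hn)) δ q

/-! ### The two-sided estimate -/

lemma neg_one_lt_mul_toReal_of_mem_Jset {p : ℝ≥0∞} {a : ℝ} (hp0 : p ≠ 0) (hp : p ≠ ∞)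
    (ha : a ∈ Jset p) : -1 < a * p.toReal := by
  rw [Jset, if_neg hp] at ha
  exact (div_lt_iff₀ (ENNReal.toReal_pos hp0 hp)).1 ha

theorem statement4_general (q : ℝ≥0∞) (hq1 : 1 ≤ q) (hq2 : q ≠ ∞)
    (α β : ℝ) (hα : α ∈ Jset (2 * q)) (hβ : β ∈ Jset (2 * q)) :
    ∃ c₁ > (0 : ℝ), ∃ c₂ > (0 : ℝ), ∀ δ : ℝ, 0 < δ → δ < 1 / 4 →
      ENNReal.ofReal (c₁ * δ ^ (1 / q.toReal) * |Real.log δ| ^ (1 / (2 * q.toReal))) ≤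
        (⨆ f ∈ BSet (2 * q) α β ∩ MSet 1, omegaDT 1 f δ (jacobi α β) q) ∧
      (⨆ f ∈ BSet (2 * q) α β ∩ MSet 1, omegaDT 1 f δ (jacobi α β) q) ≤
        ENNReal.ofReal (c₂ * δ ^ (1 / q.toReal) * |Real.log δ| ^ (1 / (2 * q.toReal))) := by
  have h2q0 : 2 * q ≠ 0 := mul_ne_zero two_ne_zero (zero_lt_one.trans_le hq1).ne'
  have h2q : 2 * q ≠ ∞ := ENNReal.mul_ne_top ENNReal.ofNat_ne_top hq2
  have hα' := toReal_two_mul q ▸ neg_one_lt_mul_toReal_of_mem_Jset h2q0 h2q hα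
  have hβ' := toReal_two_mul q ▸ neg_one_lt_mul_toReal_of_mem_Jset h2q0 h2q hβ
  obtain ⟨c₁, hc₁, hlower⟩ := exists_le_iSup_omegaDT α hq1 hq2 hβ'
  obtain ⟨c₂, hc₂, hupper⟩ := exists_omegaDT_le hq1 hq2 hα' hβ'
  simp only [mul_assoc]
  refine ⟨c₁, hc₁, c₂, hc₂, fun δ hδ hδ4 => ⟨hlower δ hδ hδ4, iSup₂_le fun f hf => ?_⟩⟩
  refine (hupper δ hδ hδ4 f hf.1.1 (kMonotoneOn_one_iff.1 hf.2)).trans_eq ?_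
  rw [hf.1.2, mul_one, modulusRate]

lemma mul_rpow_div_log_abs_log_rpow_le {c δ s X : ℝ} (hc : 0 ≤ c) (hX : 0 ≤ X) (hs : 0 ≤ s)
    (hδ : 0 < δ) (hδ4 : δ < 1 / 4) :
    c * Real.log (Real.log 4) ^ s * X / |Real.log (|Real.log δ|)| ^ s ≤ c * X := by
  have hloglog4 : 0 < Real.log (Real.log 4) := Real.log_pos one_lt_log_four
  have hloglog : Real.log (Real.log 4) ≤ |Real.log (|Real.log δ|)| :=
    (Real.log_le_log (zero_lt_one.trans one_lt_log_four) (log_four_le_abs_log hδ hδ4)).trans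
      (le_abs_self _)
  have hpos : 0 < |Real.log (|Real.log δ|)| ^ s :=
    Real.rpow_pos_of_pos (hloglog4.trans_le hloglog) _
  rw [div_le_iff₀ hpos, mul_right_comm]
  gcongr

theorem statement4 (q : ℝ≥0∞) (hq1 : 1 ≤ q) (hq2 : q ≠ ∞)
    (α β : ℝ) (hα : α ∈ Jset (2 * q)) (hβ : β ∈ Jset (2 * q)) (lam : ℝ) (hlam : 1 < lam) :
    ∃ c₁ > (0 : ℝ), ∃ c₂ > (0 : ℝ), ∀ δ : ℝ, 0 < δ → δ < 1 / 4 →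
      ENNReal.ofReal (c₁ * δ ^ (1 / q.toReal) * |Real.log δ| ^ (1 / (2 * q.toReal)) /
          (abs (Real.log |Real.log δ|)) ^ (lam / (2 * q.toReal))) ≤
        (⨆ f ∈ BSet (2 * q) α β ∩ MSet 1, omegaDT 1 f δ (jacobi α β) q) ∧
      (⨆ f ∈ BSet (2 * q) α β ∩ MSet 1, omegaDT 1 f δ (jacobi α β) q) ≤
        ENNReal.ofReal (c₂ * δ ^ (1 / q.toReal) * |Real.log δ| ^ (1 / (2 * q.toReal))) := by
  obtain ⟨c₁, hc₁, c₂, hc₂, hbounds⟩ := statement4_general q hq1 hq2 α β hα hβ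
  refine ⟨c₁ * Real.log (Real.log 4) ^ (lam / (2 * q.toReal)),
    mul_pos hc₁ (Real.rpow_pos_of_pos (Real.log_pos one_lt_log_four) _), c₂, hc₂,
    fun δ hδ hδ4 => ⟨(ENNReal.ofReal_le_ofReal ?_).trans (hbounds δ hδ hδ4).1,
      (hbounds δ hδ hδ4).2⟩⟩
  rw [mul_assoc, mul_assoc c₁ (δ ^ _)]
  exact mul_rpow_div_log_abs_log_rpow_le hc₁.le (by positivity) (by positivity) hδ hδ4
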